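/- arXiv:math/0009134 — 9 statements merged into one kernel-verified Lean document; each statement's English description precedes it below -/
import Mathlib

section
/- Let R be a commutative ring and let y1, y2, y3 ∈ R satisfy y1·y2·y3 = 1. Set x1 = y1 + y2 + y3 and x2 = y1·y2 + y1·y3 + y2·y3. Then y1^5 + y2^5 + y3^5 + (y1·y2)^5 + (y1·y3)^5 + (y2·y3)^5 = P_5(x1,x2). -/
/-!
Newton's identity `fifth_power_sum` writes a fifth power sum in three variables through their
elementary symmetric functions. It is applied to `y1, y2, y3`, with elementary symmetric functions
`(x1, x2, 1)`, and to the pairwise products `y1 * y2, y1 * y3, y2 * y3`, whose elementary symmetric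
functions are `(x2, x1, 1)` because `y1 * y2 * y3 = 1`. The sum of the two expressions is `P5 x1 x2`.
-/

/-- The degree-5 generalized Chebyshev polynomial in two variables. -/
def P5 {R : Type*} [CommRing R] (x1 x2 : R) : R :=
  x1 ^ 5 + x2 ^ 5 - 5 * x1 * x2 * (x1 ^ 2 + x2 ^ 2) + 5 * x1 * x2 * (x1 + x2)
    + 5 * (x1 ^ 2 + x2 ^ 2) - 5 * (x1 + x2)

/-- Newton's identity for the fifth power sum of three variables in terms of the elementary
symmetric polynomials. -/
theorem fifth_power_sum {R : Type*} [CommRing R] (a b c : R) :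
    a ^ 5 + b ^ 5 + c ^ 5
      = (a + b + c) ^ 5 - 5 * (a + b + c) ^ 3 * (a * b + a * c + b * c)
        + 5 * (a + b + c) * (a * b + a * c + b * c) ^ 2
        + 5 * (a + b + c) ^ 2 * (a * b * c) - 5 * (a * b + a * c + b * c) * (a * b * c) := by
  ring

/-- `P_5` equals the sum of the two Dickson polynomials of the first kind
`D_5^{(1)}(x1,x2,1) + D_5^{(2)}(x1,x2,1)`. -/
theorem P5_eq_sum_dickson {R : Type*} [CommRing R]
    (y1 y2 y3 : R) (h : y1 * y2 * y3 = 1) :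
    y1 ^ 5 + y2 ^ 5 + y3 ^ 5 + (y1 * y2) ^ 5 + (y1 * y3) ^ 5 + (y2 * y3) ^ 5
      = P5 (y1 + y2 + y3) (y1 * y2 + y1 * y3 + y2 * y3) := by
  -- The second and third elementary symmetric functions of the pairwise products are
  -- `(y1 + y2 + y3) * e` and `e ^ 2`,
  -- where `e = y1 * y2 * y3 = 1`.
  have h2 : y1 * y2 * (y1 * y3) + y1 * y2 * (y2 * y3) + y1 * y3 * (y2 * y3) = y1 + y2 + y3 := by
    linear_combination (y1 + y2 + y3) * h
  have h3 : y1 * y2 * (y1 * y3) * (y2 * y3) = 1 := by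
    linear_combination (y1 * y2 * y3 + 1) * h
  have hy := fifth_power_sum y1 y2 y3
  have hz := fifth_power_sum (y1 * y2) (y1 * y3) (y2 * y3)
  rw [h] at hy
  rw [h2, h3] at hz
  unfold P5
  linear_combination hy + hz
end

section
/- For all complex numbers x1, x2 one has P_5(x1,x2) = −10·F_{−2}( −(x1+x2)/2 + 1 , i·(x1−x2)/2 ) − 2, where i is the imaginary unit. In other words, the ℚ(i)-linear change of variables (x1,x2) ↦ (−(x1+x2)/2 + 1, i(x1−x2)/2) identifies the Chebyshev quintic P_5 with the skew-pentagon quintic −10·F_{−2} − 2. -/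
/-- The skew-pentagon quintic polynomial `F_{-2}(x1,x2)`. -/
noncomputable def Fneg2 (x1 x2 : ℂ) : ℂ :=
  (x1 - 2) * (x2 ^ 4 - x2 ^ 2 * (2 * x1 ^ 2 - 2 * x1 + 1) + (1 / 5) * (x1 ^ 2 + x1 - 1) ^ 2)

/-- The `ℚ(i)`-linear change of variables `(x1,x2) ↦ (-(x1+x2)/2 + 1, i(x1-x2)/2)`
identifies the Chebyshev quintic `P_5` with the skew-pentagon quintic `-10·F_{-2} - 2`. -/
theorem P5_eq_skew_pentagon (x1 x2 : ℂ) :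
    P5 x1 x2 = -10 * Fneg2 (-(x1 + x2) / 2 + 1) (Complex.I * (x1 - x2) / 2) - 2 := by
  have hsq : (Complex.I * (x1 - x2) / 2) ^ 2 = -(x1 - x2) ^ 2 / 4 := by
    rw [div_pow, mul_pow, Complex.I_sq]; ring
  have hfour : (Complex.I * (x1 - x2) / 2) ^ 4 = (x1 - x2) ^ 4 / 16 := by
    rw [div_pow, mul_pow, Complex.I_pow_four]; ring
  -- The second argument of `Fneg2` enters only through even powers, so `I` disappears.
  rw [P5, Fneg2, hsq, hfour]
  ring
end

section
/- The affine quintic threefold X ⊂ ℂ⁴ defined by f_5(x_1,x_2,x_4,x_5) = 0 has exactly 120 singular points; that is, the set of points p ∈ ℂ⁴ at which f_5 and all four of its partial derivatives vanish has exactly 120 = 10² + 4² + 2² elements. -/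
/-!
The polynomial `P5` is the function `∑ zᵢ⁵ + ∑ zᵢ⁻⁵` of `z₁, z₂, z₃` with `z₁ z₂ z₃ = 1`, written in
terms of `x = ∑ zᵢ` and `y = ∑ zᵢ⁻¹`. It has exactly 16 critical points:
2 with value `6`, 4 with value `-3` and 10 with value `-2`. A singular point of `f5 = 0` is a
pair of critical points of `P5` with the same critical value, whence `2² + 4² + 10² = 120`.

The critical points are determined in `crit_cases`. The difference of the two partial
derivatives of `P5` is `5 (x - y) (s + 2) (s² - s + 1 - 2 x y)` with `s = x + y`, and on the zero
locus of each factor the remaining equation becomes a polynomial in one variable. Each of the five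
resulting families is the graph of a polynomial function over the zero set of a squarefree
polynomial in `x`, so its cardinality is the degree of that polynomial (`ncard_graph`).
-/

open MvPolynomial

/-- `f_5(x_1,x_2,x_4,x_5) = P_5(x_1,x_2) - P_5(x_4,x_5)` as a polynomial in four
variables with complex coefficients. -/
noncomputable def f5 : MvPolynomial (Fin 4) ℂ :=
  P5 (X 0) (X 1) - P5 (X 2) (X 3)

/-- `∂P5/∂x` divided by `5`; the derivative in `y` is `5 * dP5 y x` by symmetry. -/
def dP5 (x y : ℂ) : ℂ :=
  x ^ 4 - 3 * x ^ 2 * y - y ^ 3 + 2 * x * y + y ^ 2 + 2 * x - 1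

/-- The critical points of `P5` with critical value `v`. -/
def critSet (v : ℂ) : Set (ℂ × ℂ) :=
  {z | dP5 z.1 z.2 = 0 ∧ dP5 z.2 z.1 = 0 ∧ P5 z.1 z.2 = v}

/-- The part of the graph of `g` over the zero set of `q`. -/
def graphOver (q : Polynomial ℂ) (g : ℂ → ℂ) : Set (ℂ × ℂ) :=
  {z | q.eval z.1 = 0 ∧ z.2 = g z.1}

/-- If `q` has no multiple root, its graph set has `deg q` elements, as `ℂ` is algebraically
closed. -/
lemma ncard_graph (q : Polynomial ℂ) (g : ℂ → ℂ) (hq : q ≠ 0)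
    (h : ∀ x, q.eval x = 0 → q.derivative.eval x ≠ 0) :
    (graphOver q g).ncard = q.natDegree ∧ (graphOver q g).Finite := by
  classical
  have himg : graphOver q g = (fun x => (x, g x)) '' (q.roots.toFinset : Set ℂ) := by
    ext ⟨x, y⟩
    simp only [graphOver, Set.mem_ofPred_eq, Set.mem_image, Finset.mem_coe, Multiset.mem_toFinset,
      Polynomial.mem_roots hq, Polynomial.IsRoot.def, Prod.mk.injEq]
    constructor
    · rintro ⟨h1, h2⟩
      exact ⟨x, h1, rfl, h2.symm⟩
    · rintro ⟨x', h1, rfl, h2⟩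
      exact ⟨h1, h2.symm⟩
  have hinj : Function.Injective (fun x : ℂ => (x, g x)) := fun a b hab => congrArg Prod.fst hab
  have hnd : q.roots.Nodup := by
    rw [Multiset.nodup_iff_count_le_one]
    intro a
    rw [Polynomial.count_roots]
    by_contra! hlt
    obtain ⟨h1, h2⟩ := (Polynomial.one_lt_rootMultiplicity_iff_isRoot hq).1 hlt
    exact h a h1 h2
  constructor
  · rw [himg, Set.ncard_image_of_injective _ hinj, Set.ncard_coe_finset,
      Multiset.toFinset_card_of_nodup hnd]
    exact IsAlgClosed.card_roots_eq_natDegree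
  · rw [himg]
    exact (Finset.finite_toSet _).image _

/-- The minimal polynomial of the golden ratio; its roots give the critical points `(x, x)` with
value `6`. -/
noncomputable def qA : Polynomial ℂ := Polynomial.X ^ 2 - Polynomial.X - 1

/-- The minimal polynomial of `ω φ`, for `ω` a primitive cube root of unity and `φ` the golden
ratio. -/
noncomputable def qB : Polynomial ℂ := Polynomial.X ^ 4 + Polynomial.X ^ 3 + 2 * Polynomial.X ^ 2 - Polynomial.X + 1

/-- The polynomial whose roots give the remaining critical points `(x, x)` on the diagonal. -/
noncomputable def qC : Polynomial ℂ := Polynomial.X ^ 2 - 3 * Polynomial.X + 1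

/-- The polynomial cutting out the critical points on the line `x + y = -2`. -/
noncomputable def qD : Polynomial ℂ := (Polynomial.X + 1) ^ 4 + 5 * (Polynomial.X + 1) ^ 2 + 5

/-- The tenth cyclotomic polynomial; its roots are the first coordinates of the critical points
on `x y = 1` with `x + y` a root of `s² - s - 1`. -/
noncomputable def qE : Polynomial ℂ := Polynomial.X ^ 4 - Polynomial.X ^ 3 + Polynomial.X ^ 2 - Polynomial.X + 1

lemma eval_qA (x : ℂ) : qA.eval x = x ^ 2 - x - 1 := by simp [qA]
lemma eval_qB (x : ℂ) : qB.eval x = x ^ 4 + x ^ 3 + 2 * x ^ 2 - x + 1 := by simp [qB]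
lemma eval_qC (x : ℂ) : qC.eval x = x ^ 2 - 3 * x + 1 := by simp [qC]
lemma eval_qD (x : ℂ) : qD.eval x = (x + 1) ^ 4 + 5 * (x + 1) ^ 2 + 5 := by simp [qD]
lemma eval_qE (x : ℂ) : qE.eval x = x ^ 4 - x ^ 3 + x ^ 2 - x + 1 := by simp [qE]

lemma deg_qA : qA.natDegree = 2 := by unfold qA; compute_degree!
lemma deg_qB : qB.natDegree = 4 := by unfold qB; compute_degree!
lemma deg_qC : qC.natDegree = 2 := by unfold qC; compute_degree!
lemma deg_qD : qD.natDegree = 4 := by unfold qD; compute_degree!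
lemma deg_qE : qE.natDegree = 4 := by unfold qE; compute_degree!

lemma card_A (g : ℂ → ℂ) : (graphOver qA g).ncard = 2 ∧ (graphOver qA g).Finite := by
  rw [← deg_qA]
  refine ncard_graph _ _ (fun h => by simpa [h] using deg_qA) fun x hx hd => ?_
  rw [eval_qA] at hx
  simp [qA] at hd
  grind

lemma card_B (g : ℂ → ℂ) : (graphOver qB g).ncard = 4 ∧ (graphOver qB g).Finite := by
  rw [← deg_qB]
  refine ncard_graph _ _ (fun h => by simpa [h] using deg_qB) fun x hx hd => ?_
  rw [eval_qB] at hx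
  simp [qB] at hd
  grind

lemma card_C (g : ℂ → ℂ) : (graphOver qC g).ncard = 2 ∧ (graphOver qC g).Finite := by
  rw [← deg_qC]
  refine ncard_graph _ _ (fun h => by simpa [h] using deg_qC) fun x hx hd => ?_
  rw [eval_qC] at hx
  simp [qC] at hd
  grind

lemma card_D (g : ℂ → ℂ) : (graphOver qD g).ncard = 4 ∧ (graphOver qD g).Finite := by
  rw [← deg_qD]
  refine ncard_graph _ _ (fun h => by simpa [h] using deg_qD) fun x hx hd => ?_
  rw [eval_qD] at hx
  simp [qD, Polynomial.derivative_pow] at hd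
  grind

lemma card_E (g : ℂ → ℂ) : (graphOver qE g).ncard = 4 ∧ (graphOver qE g).Finite := by
  rw [← deg_qE]
  refine ncard_graph _ _ (fun h => by simpa [h] using deg_qE) fun x hx hd => ?_
  rw [eval_qE] at hx
  simp [qE] at hd
  grind

/-- The critical points with value `6`. -/
def setA : Set (ℂ × ℂ) := graphOver qA fun x => x

/-- The critical points with value `-3`; they satisfy `x y = 1 - x - y`, and the formula for `y`
is `(1 - x) / (1 + x)` reduced modulo `qB`. -/
noncomputable def setB : Set (ℂ × ℂ) := graphOver qB fun x => (1 - 2 * x - x ^ 3) / 2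

/-- The diagonal critical points with value `-2`. -/
def setC : Set (ℂ × ℂ) := graphOver qC fun x => x

/-- The critical points with value `-2` and `x + y = -2`. -/
def setD : Set (ℂ × ℂ) := graphOver qD fun x => -2 - x

/-- The critical points with value `-2` and `x y = 1`, `x` a primitive tenth root of unity. -/
def setE : Set (ℂ × ℂ) := graphOver qE fun x => 1 - x + x ^ 2 - x ^ 3

/-- Every critical point of `P5` lies in one of the five families. -/
lemma crit_cases {x y : ℂ} (h1 : dP5 x y = 0) (h2 : dP5 y x = 0) :
    (x, y) ∈ setA ∨ (x, y) ∈ setB ∨ (x, y) ∈ setC ∨ (x, y) ∈ setD ∨ (x, y) ∈ setE := by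
  simp only [setA, setB, setC, setD, setE, graphOver, Set.mem_ofPred_eq, eval_qA, eval_qB, eval_qC,
    eval_qD, eval_qE]
  unfold dP5 at h1 h2
  have hprod : (x - y) * ((x + y + 2) * ((x + y) ^ 2 - (x + y) + 1 - 2 * (x * y))) = 0 := by
    linear_combination h1 - h2
  rcases mul_eq_zero.1 hprod with h | h
  · obtain rfl : x = y := sub_eq_zero.1 h
    have : (x ^ 2 - x - 1) * (x ^ 2 - 3 * x + 1) = 0 := by linear_combination h1
    rcases mul_eq_zero.1 this with h | h
    · exact Or.inl ⟨h, rfl⟩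
    · exact Or.inr (Or.inr (Or.inl ⟨h, rfl⟩))
  rcases mul_eq_zero.1 h with h | h
  · obtain rfl : y = -2 - x := by linear_combination h
    exact Or.inr (Or.inr (Or.inr (Or.inl ⟨by linear_combination h1, rfl⟩)))
  · have hs : ((x + y) ^ 2 + (x + y) - 1) * ((x + y) ^ 2 - (x + y) - 1) = 0 := by grind
    rcases mul_eq_zero.1 hs with hs | hs
    · have hp : x * y = 1 - x - y := by linear_combination (hs - h) / 2
      have hq : x ^ 4 + x ^ 3 + 2 * x ^ 2 - x + 1 = 0 := by grind
      exact Or.inr (Or.inl ⟨hq, by grind⟩)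
    · have hp : x * y = 1 := by linear_combination (hs - h) / 2
      have hq : x ^ 4 - x ^ 3 + x ^ 2 - x + 1 = 0 := by grind
      exact Or.inr (Or.inr (Or.inr (Or.inr ⟨hq, by grind⟩)))

lemma setA_sub : setA ⊆ critSet 6 := by
  rintro ⟨x, y⟩ ⟨h, hy⟩
  simp only [eval_qA] at h hy
  subst hy
  simp only [critSet, dP5, P5, Set.mem_ofPred_eq]
  refine ⟨?_, ?_, ?_⟩ <;> grind

lemma setB_sub : setB ⊆ critSet (-3) := by
  rintro ⟨x, y⟩ ⟨h, hy⟩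
  simp only [eval_qB] at h hy
  simp only [critSet, dP5, P5, Set.mem_ofPred_eq]
  refine ⟨?_, ?_, ?_⟩ <;> grind

lemma setC_sub : setC ⊆ critSet (-2) := by
  rintro ⟨x, y⟩ ⟨h, hy⟩
  simp only [eval_qC] at h hy
  subst hy
  simp only [critSet, dP5, P5, Set.mem_ofPred_eq]
  refine ⟨?_, ?_, ?_⟩ <;> grind

lemma setD_sub : setD ⊆ critSet (-2) := by
  rintro ⟨x, y⟩ ⟨h, hy⟩
  simp only [eval_qD] at h hy
  subst hy
  simp only [critSet, dP5, P5, Set.mem_ofPred_eq]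
  refine ⟨?_, ?_, ?_⟩ <;> grind

lemma setE_sub : setE ⊆ critSet (-2) := by
  rintro ⟨x, y⟩ ⟨h, hy⟩
  simp only [eval_qE] at h hy
  simp only [critSet, dP5, P5, Set.mem_ofPred_eq]
  refine ⟨?_, ?_, ?_⟩ <;> grind

lemma critSet_value_unique {z : ℂ × ℂ} {v w : ℂ} (hv : z ∈ critSet v) (hw : z ∈ critSet w) :
    v = w := hv.2.2.symm.trans hw.2.2

lemma critSet_six : critSet 6 = setA := by
  refine Set.Subset.antisymm (fun z hz => ?_) setA_sub
  rcases crit_cases hz.1 hz.2.1 with h | h | h | h | h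
  · exact h
  · exact absurd (critSet_value_unique hz (setB_sub h)) (by norm_num)
  · exact absurd (critSet_value_unique hz (setC_sub h)) (by norm_num)
  · exact absurd (critSet_value_unique hz (setD_sub h)) (by norm_num)
  · exact absurd (critSet_value_unique hz (setE_sub h)) (by norm_num)

lemma critSet_neg_three : critSet (-3) = setB := by
  refine Set.Subset.antisymm (fun z hz => ?_) setB_sub
  rcases crit_cases hz.1 hz.2.1 with h | h | h | h | h
  · exact absurd (critSet_value_unique hz (setA_sub h)) (by norm_num)
  · exact h
  · exact absurd (critSet_value_unique hz (setC_sub h)) (by norm_num)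
  · exact absurd (critSet_value_unique hz (setD_sub h)) (by norm_num)
  · exact absurd (critSet_value_unique hz (setE_sub h)) (by norm_num)

lemma critSet_neg_two : critSet (-2) = setC ∪ (setD ∪ setE) := by
  refine Set.Subset.antisymm (fun z hz => ?_)
    (Set.union_subset setC_sub (Set.union_subset setD_sub setE_sub))
  rcases crit_cases hz.1 hz.2.1 with h | h | h | h | h
  · exact absurd (critSet_value_unique hz (setA_sub h)) (by norm_num)
  · exact absurd (critSet_value_unique hz (setB_sub h)) (by norm_num)
  · exact Or.inl h
  · exact Or.inr (Or.inl h)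
  · exact Or.inr (Or.inr h)

lemma card_neg_two : (critSet (-2)).ncard = 10 ∧ (critSet (-2)).Finite := by
  obtain ⟨hC, fC⟩ : setC.ncard = 2 ∧ setC.Finite := card_C _
  obtain ⟨hD, fD⟩ : setD.ncard = 4 ∧ setD.Finite := card_D _
  obtain ⟨hE, fE⟩ : setE.ncard = 4 ∧ setE.Finite := card_E _
  have dDE : Disjoint setD setE := by
    rw [Set.disjoint_left]
    rintro ⟨x, y⟩ ⟨h1, h2⟩ ⟨h3, h4⟩
    simp only [eval_qD, eval_qE] at h1 h2 h3 h4
    grind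
  have dC : Disjoint setC (setD ∪ setE) := by
    rw [Set.disjoint_left]
    rintro ⟨x, y⟩ ⟨h1, h2⟩ (⟨h3, h4⟩ | ⟨h3, h4⟩)
    · simp only [eval_qC, eval_qD] at h1 h2 h3 h4
      grind
    · simp only [eval_qC, eval_qE] at h1 h2 h3 h4
      grind
  rw [critSet_neg_two]
  refine ⟨?_, fC.union (fD.union fE)⟩
  rw [Set.ncard_union_eq dC fC (fD.union fE), Set.ncard_union_eq dDE fD fE, hC, hD, hE]

lemma singular_iff (p : Fin 4 → ℂ) :
    (eval p f5 = 0 ∧ ∀ i : Fin 4, eval p (pderiv i f5) = 0) ↔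
      P5 (p 0) (p 1) = P5 (p 2) (p 3) ∧ dP5 (p 0) (p 1) = 0 ∧ dP5 (p 1) (p 0) = 0 ∧
        dP5 (p 2) (p 3) = 0 ∧ dP5 (p 3) (p 2) = 0 := by
  have hv : eval p f5 = P5 (p 0) (p 1) - P5 (p 2) (p 3) := by simp [f5, P5]
  have h5 : ∀ i : Fin 4, pderiv i (5 : MvPolynomial (Fin 4) ℂ) = 0 := fun i =>
    (pderiv i).map_natCast 5
  have h0 : eval p (pderiv 0 f5) = 5 * dP5 (p 0) (p 1) := by
    simp [f5, P5, dP5, pderiv_X, h5, Derivation.leibniz, Derivation.leibniz_pow]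
    ring
  have h1 : eval p (pderiv 1 f5) = 5 * dP5 (p 1) (p 0) := by
    simp [f5, P5, dP5, pderiv_X, h5, Derivation.leibniz, Derivation.leibniz_pow]
    ring
  have h2 : eval p (pderiv 2 f5) = -5 * dP5 (p 2) (p 3) := by
    simp [f5, P5, dP5, pderiv_X, h5, Derivation.leibniz, Derivation.leibniz_pow]
    ring
  have h3 : eval p (pderiv 3 f5) = -5 * dP5 (p 3) (p 2) := by
    simp [f5, P5, dP5, pderiv_X, h5, Derivation.leibniz, Derivation.leibniz_pow]
    ring
  simp [Fin.forall_fin_succ, hv, sub_eq_zero]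
  simp [h0, h1, h2, h3]

/-- Concatenation of two points of the plane to a point of four-space. -/
def glue (z : (ℂ × ℂ) × (ℂ × ℂ)) : Fin 4 → ℂ := ![z.1.1, z.1.2, z.2.1, z.2.2]

lemma glue_injective : Function.Injective glue := by
  rintro ⟨⟨a, b⟩, ⟨c, d⟩⟩ ⟨⟨a', b'⟩, ⟨c', d'⟩⟩ h
  have h0 := congrFun h 0
  have h1 := congrFun h 1
  have h2 := congrFun h 2
  have h3 := congrFun h 3
  simp [glue] at h0 h1 h2 h3
  simp [h0, h1, h2, h3]

lemma singular_eq_image :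
    {p : Fin 4 → ℂ | eval p f5 = 0 ∧ ∀ i : Fin 4, eval p (pderiv i f5) = 0} =
      glue '' (critSet 6 ×ˢ critSet 6 ∪
        (critSet (-3) ×ˢ critSet (-3) ∪ critSet (-2) ×ˢ critSet (-2))) := by
  ext p
  rw [Set.mem_ofPred_eq, singular_iff]
  constructor
  · rintro ⟨hP, h0, h1, h2, h3⟩
    refine ⟨((p 0, p 1), (p 2, p 3)), ?_, by ext i; fin_cases i <;> rfl⟩
    have key : ∀ v, (p 0, p 1) ∈ critSet v →
        ((p 0, p 1), (p 2, p 3)) ∈ critSet v ×ˢ critSet v := fun v hv =>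
      ⟨hv, h2, h3, hP.symm.trans hv.2.2⟩
    rcases crit_cases h0 h1 with h | h | h | h | h
    · exact Or.inl (key _ (setA_sub h))
    · exact Or.inr (Or.inl (key _ (setB_sub h)))
    · exact Or.inr (Or.inr (key _ (setC_sub h)))
    · exact Or.inr (Or.inr (key _ (setD_sub h)))
    · exact Or.inr (Or.inr (key _ (setE_sub h)))
  · rintro ⟨z, hz, rfl⟩
    have key : ∀ v, z ∈ critSet v ×ˢ critSet v →
        P5 z.1.1 z.1.2 = P5 z.2.1 z.2.2 ∧ dP5 z.1.1 z.1.2 = 0 ∧ dP5 z.1.2 z.1.1 = 0 ∧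
          dP5 z.2.1 z.2.2 = 0 ∧ dP5 z.2.2 z.2.1 = 0 := fun v hv =>
      ⟨hv.1.2.2.trans hv.2.2.2.symm, hv.1.1, hv.1.2.1, hv.2.1, hv.2.2.1⟩
    rcases hz with hz | hz | hz <;> exact key _ hz

lemma disjoint_prod {v w : ℂ} (h : v ≠ w) :
    Disjoint (critSet v ×ˢ critSet v) (critSet w ×ˢ critSet w) := by
  rw [Set.disjoint_left]
  exact fun z hv hw => h (critSet_value_unique hv.1 hw.1)

/-- The affine quintic threefold `f_5 = 0` in `ℂ⁴` has exactly
`120 = 10² + 4² + 2²` singular points. -/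
theorem card_singular_points_chebyshev_threefold :
    {p : Fin 4 → ℂ | eval p f5 = 0 ∧ ∀ i : Fin 4, eval p (pderiv i f5) = 0}.ncard
      = 120 := by
  obtain ⟨c6, f6⟩ : (critSet 6).ncard = 2 ∧ (critSet 6).Finite := by
    rw [critSet_six]; exact card_A _
  obtain ⟨c3, f3⟩ : (critSet (-3)).ncard = 4 ∧ (critSet (-3)).Finite := by
    rw [critSet_neg_three]; exact card_B _
  obtain ⟨c2, f2⟩ := card_neg_two
  rw [singular_eq_image, Set.ncard_image_of_injective _ glue_injective,
    Set.ncard_union_eq _ (f6.prod f6) ((f3.prod f3).union (f2.prod f2)),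
    Set.ncard_union_eq (disjoint_prod (by norm_num)) (f3.prod f3) (f2.prod f2),
    Set.ncard_prod, Set.ncard_prod, Set.ncard_prod, c6, c3, c2]
  exact Set.disjoint_union_right.2
    ⟨disjoint_prod (by norm_num), disjoint_prod (by norm_num)⟩
end

section
/- The singular locus of the covering Y consists of exactly 8750 points. Concretely: let H(y_1,y_2,y_4,y_5) ∈ ℤ[y_1,y_2,y_4,y_5] be the polynomial (y_4 y_5)^5·( y_1^{10} y_2^5 + y_1^5 y_2^{10} + 1 + y_2^5 + y_1^5 + y_1^{10} y_2^{10} ) − (y_1 y_2)^5·( y_4^{10} y_5^5 + y_4^5 y_5^{10} + 1 + y_5^5 + y_4^5 + y_4^{10} y_5^{10} ). Then the set of points p = (y_1,y_2,y_4,y_5) ∈ ℂ⁴ with y_1 y_2 y_4 y_5 ≠ 0 at which H and all four partial derivatives of H vanish has exactly 8750 elements. -/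
/-!
On the torus, `H` and its gradient depend, up to units, only on the fifth powers
`a, b, c, d` of the coordinates. With `F(a,b) = a²b + ab² + 1 + b + a + a²b²` and
`f = F / (ab)`, the singular points are exactly those for which `(a,b)` and `(c,d)` are critical
points of `f` with `f(a,b) = f(c,d)` (`singular_iff`). The critical equations factor as
`(1 + b)(a²b - 1) = 0` and `(1 + a)(ab² - 1) = 0`, so that `f` has exactly six critical points on
the torus, for `ω` a primitive cube root of unity (`crit_cases`):
* `(1,1)`, of value `6`;
* `(-1,-1)`, `(1,-1)`, `(-1,1)`, of value `-2`;
* `(ω,ω)`, `(ω²,ω²)`, of value `-3`.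

There are `1² + 3² + 2² = 14` pairs of critical points with equal values, and each of them has
`5⁴` preimages under the fifth power map, whence `14 · 625 = 8750`.
-/

open MvPolynomial

/-- The polynomial `H(y_1,y_2,y_4,y_5) ∈ ℤ[y_1,y_2,y_4,y_5]` obtained by clearing
denominators in the Laurent equation defining the covering `Y`.  The variables
`y_1, y_2, y_4, y_5` are indexed by `0, 1, 2, 3` respectively. -/
noncomputable def Hpoly : MvPolynomial (Fin 4) ℤ :=
  (X 2 * X 3) ^ 5 *
      (X 0 ^ 10 * X 1 ^ 5 + X 0 ^ 5 * X 1 ^ 10 + 1 + X 1 ^ 5 + X 0 ^ 5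
        + X 0 ^ 10 * X 1 ^ 10)
    - (X 0 * X 1) ^ 5 *
      (X 2 ^ 10 * X 3 ^ 5 + X 2 ^ 5 * X 3 ^ 10 + 1 + X 3 ^ 5 + X 2 ^ 5
        + X 2 ^ 10 * X 3 ^ 10)

/-- A primitive cube root of unity. -/
noncomputable def omega : ℂ := Complex.exp (2 * Real.pi * Complex.I / 3)

lemma omega_primitive : IsPrimitiveRoot omega 3 := by
  simpa [omega] using Complex.isPrimitiveRoot_exp 3 (by norm_num)

lemma omega_sq : omega ^ 2 + omega + 1 = 0 := by
  have h := omega_primitive.geom_sum_eq_zero (by norm_num)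
  simp only [Finset.sum_range_succ, Finset.sum_range_zero] at h
  linear_combination h

lemma omega_ne_one : omega ≠ 1 := omega_primitive.ne_one (by norm_num)

lemma omega_ne_zero : omega ≠ 0 := omega_primitive.ne_zero (by norm_num)

/-- The numbers `1, -1, ω, ω²` which occur as coordinates of critical points; the last one is
written `-1 - ω`. -/
noncomputable def critCoord : Fin 4 → ℂ := ![1, -1, omega, -1 - omega]

/-- The value of `f` at `(critCoord i, critCoord j)` if this is a critical point of `f`,
and `0` otherwise (`0` is not a critical value). -/
def critValue : Fin 4 → Fin 4 → ℤ :=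
  ![![6, -2, 0, 0], ![-2, -2, 0, 0], ![0, 0, -3, 0], ![0, 0, 0, -3]]

/-- Index set for the pairs of critical points with equal values. -/
def critPairs : Finset (Fin 4 → Fin 4) :=
  Finset.univ.filter fun k => critValue (k 0) (k 1) ≠ 0 ∧
    critValue (k 0) (k 1) = critValue (k 2) (k 3)

set_option maxRecDepth 100000 in
lemma card_critPairs : critPairs.card = 14 := by
  decide +kernel

lemma critCoord_ne_zero (i : Fin 4) : critCoord i ≠ 0 := by
  have h := omega_sq
  fin_cases i <;> simp [critCoord, omega_ne_zero]
  intro h0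
  apply one_ne_zero (α := ℂ)
  linear_combination omega * h0 + h

lemma critCoord_injective : Function.Injective critCoord := by
  have h := omega_sq
  have h1 := omega_ne_one
  have h0 := omega_ne_zero
  have hm : omega ≠ -1 := by
    intro e
    rw [e] at h
    norm_num at h
  have hd : 2 * omega + 1 ≠ 0 := by
    intro e
    have : (3 : ℂ) = 0 := by linear_combination 4 * h - (2 * omega + 1) * e
    norm_num at this
  have hn : omega ≠ -2 := by
    intro e
    rw [e] at h
    norm_num at h
  intro i j hij
  fin_cases i <;> fin_cases j <;> simp [critCoord] at hij ⊢ <;> grind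

/-- The common numerator `F` of the two sides of the equation, in terms of fifth powers. -/
def numer (a b : ℂ) : ℂ := a ^ 2 * b + a * b ^ 2 + 1 + b + a + a ^ 2 * b ^ 2

/-- The equations `a ∂f/∂a = 0` and `b ∂f/∂b = 0` multiplied by `ab`: for `a, b ≠ 0` they say that
`(a,b)` is a critical point of `f = F / (ab)`. -/
def IsCrit (a b : ℂ) : Prop := (1 + b) * (a ^ 2 * b - 1) = 0 ∧ (1 + a) * (a * b ^ 2 - 1) = 0

lemma crit_cases_s8 {a b : ℂ} (h : IsCrit a b) :
    ∃ i j, critValue i j ≠ 0 ∧ a = critCoord i ∧ b = critCoord j := by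
  obtain ⟨h1, h2⟩ := h
  have hw := omega_sq
  rcases mul_eq_zero.1 h1 with h1 | h1
  · have hb : b = -1 := by linear_combination h1
    subst hb
    rcases mul_eq_zero.1 h2 with h2 | h2
    · exact ⟨1, 1, by decide, by simp [critCoord]; linear_combination h2, by simp [critCoord]⟩
    · exact ⟨0, 1, by decide, by simp [critCoord]; linear_combination h2, by simp [critCoord]⟩
  · rcases mul_eq_zero.1 h2 with h2 | h2
    · have hb : a = -1 := by linear_combination h2
      subst hb
      exact ⟨1, 0, by decide, by simp [critCoord], by simp [critCoord]; linear_combination h1⟩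
    · have hab : a = b := by linear_combination b * h1 - a * h2
      subst hab
      have : (a - 1) * ((a - omega) * (a - (-1 - omega))) = 0 := by
        linear_combination h1 - (a - 1) * hw
      rcases mul_eq_zero.1 this with h | h
      · have := sub_eq_zero.1 h
        exact ⟨0, 0, by decide, by simpa [critCoord], by simpa [critCoord]⟩
      rcases mul_eq_zero.1 h with h | h
      · have := sub_eq_zero.1 h
        exact ⟨2, 2, by decide, by simpa [critCoord], by simpa [critCoord]⟩
      · have := sub_eq_zero.1 h
        exact ⟨3, 3, by decide, by simpa [critCoord], by simpa [critCoord]⟩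

lemma crit_of_index {i j : Fin 4} (h : critValue i j ≠ 0) :
    IsCrit (critCoord i) (critCoord j) ∧
      numer (critCoord i) (critCoord j) = critValue i j * (critCoord i * critCoord j) := by
  have hw := omega_sq
  fin_cases i <;> fin_cases j <;> simp [critValue] at h <;>
    simp [critCoord, critValue, numer, IsCrit] <;> grind

/-- Singular points in terms of the fifth powers of the coordinates: `p₀∂₀H = 0` combined with
`H = 0` is the critical equation in the first variable, and likewise for the others. -/
lemma singular_iff_s8 (p : Fin 4 → ℂ) (h : ∀ i, p i ≠ 0) :
    (aeval p Hpoly = 0 ∧ ∀ i : Fin 4, aeval p (pderiv i Hpoly) = 0) ↔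
      IsCrit (p 0 ^ 5) (p 1 ^ 5) ∧ IsCrit (p 2 ^ 5) (p 3 ^ 5) ∧
        p 2 ^ 5 * p 3 ^ 5 * numer (p 0 ^ 5) (p 1 ^ 5) =
          p 0 ^ 5 * p 1 ^ 5 * numer (p 2 ^ 5) (p 3 ^ 5) := by
  have h0 := h 0
  have h1 := h 1
  have h2 := h 2
  have h3 := h 3
  have e : aeval p Hpoly = p 2 ^ 5 * p 3 ^ 5 * numer (p 0 ^ 5) (p 1 ^ 5) -
      p 0 ^ 5 * p 1 ^ 5 * numer (p 2 ^ 5) (p 3 ^ 5) := by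
    simp [Hpoly, numer]
    ring
  have d0 : p 0 * aeval p (pderiv 0 Hpoly) = 5 * aeval p Hpoly + 5 * (p 2 ^ 5 * p 3 ^ 5) *
      ((1 + p 1 ^ 5) * ((p 0 ^ 5) ^ 2 * p 1 ^ 5 - 1)) := by
    simp [Hpoly, pderiv_X]
    ring
  have d1 : p 1 * aeval p (pderiv 1 Hpoly) = 5 * aeval p Hpoly + 5 * (p 2 ^ 5 * p 3 ^ 5) *
      ((1 + p 0 ^ 5) * (p 0 ^ 5 * (p 1 ^ 5) ^ 2 - 1)) := by
    simp [Hpoly, pderiv_X]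
    ring
  have d2 : p 2 * aeval p (pderiv 2 Hpoly) = 5 * aeval p Hpoly - 5 * (p 0 ^ 5 * p 1 ^ 5) *
      ((1 + p 3 ^ 5) * ((p 2 ^ 5) ^ 2 * p 3 ^ 5 - 1)) := by
    simp [Hpoly, pderiv_X]
    ring
  have d3 : p 3 * aeval p (pderiv 3 Hpoly) = 5 * aeval p Hpoly - 5 * (p 0 ^ 5 * p 1 ^ 5) *
      ((1 + p 2 ^ 5) * (p 2 ^ 5 * (p 3 ^ 5) ^ 2 - 1)) := by
    simp [Hpoly, pderiv_X]
    ring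
  rw [Fin.forall_fin_succ, Fin.forall_fin_succ, Fin.forall_fin_succ, Fin.forall_fin_one]
  change (_ ∧ aeval p (pderiv 0 Hpoly) = 0 ∧ aeval p (pderiv 1 Hpoly) = 0 ∧
    aeval p (pderiv 2 Hpoly) = 0 ∧ aeval p (pderiv 3 Hpoly) = 0) ↔ _
  rw [← sub_eq_zero (a := p 2 ^ 5 * p 3 ^ 5 * _), ← e]
  generalize aeval p (pderiv 0 Hpoly) = D0 at *
  generalize aeval p (pderiv 1 Hpoly) = D1 at *
  generalize aeval p (pderiv 2 Hpoly) = D2 at *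
  generalize aeval p (pderiv 3 Hpoly) = D3 at *
  generalize aeval p Hpoly = E at *
  unfold IsCrit
  constructor
  · rintro ⟨rfl, rfl, rfl, rfl, rfl⟩
    simp only [mul_zero, zero_add, zero_sub] at d0 d1 d2 d3
    have n1 : 5 * (p 2 ^ 5 * p 3 ^ 5) ≠ 0 := by simp [h2, h3]
    have n2 : 5 * (p 0 ^ 5 * p 1 ^ 5) ≠ 0 := by simp [h0, h1]
    exact ⟨⟨(mul_eq_zero.1 d0.symm).resolve_left n1, (mul_eq_zero.1 d1.symm).resolve_left n1⟩,
      ⟨(mul_eq_zero.1 (neg_eq_zero.1 d2.symm)).resolve_left n2,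
        (mul_eq_zero.1 (neg_eq_zero.1 d3.symm)).resolve_left n2⟩, rfl⟩
  · rintro ⟨⟨c0, c1⟩, ⟨c2, c3⟩, rfl⟩
    rw [c0] at d0
    rw [c1] at d1
    rw [c2] at d2
    rw [c3] at d3
    simpa [h0, h1, h2, h3] using And.intro d0 (And.intro d1 (And.intro d2 d3))

lemma mem_singular_iff (p : Fin 4 → ℂ) :
    (p 0 * p 1 * p 2 * p 3 ≠ 0 ∧ aeval p Hpoly = 0 ∧
      ∀ i : Fin 4, aeval p (pderiv i Hpoly) = 0) ↔
      ∃ k ∈ critPairs, ∀ i, p i ^ 5 = critCoord (k i) := by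
  constructor
  · rintro ⟨hp, hs⟩
    have hne : ∀ i, p i ≠ 0 := by
      simp only [mul_ne_zero_iff] at hp
      intro i
      fin_cases i <;> simp [hp]
    obtain ⟨c, c₂, hv⟩ := (singular_iff_s8 p hne).1 hs
    obtain ⟨i, j, hij, ei, ej⟩ := crit_cases_s8 c
    obtain ⟨k, l, hkl, ek, el⟩ := crit_cases_s8 c₂
    refine ⟨![i, j, k, l], ?_, ?_⟩
    · rw [ei, ej, ek, el, (crit_of_index hij).2, (crit_of_index hkl).2] at hv
      have hm : critCoord i * critCoord j * (critCoord k * critCoord l) ≠ 0 := by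
        simp [critCoord_ne_zero]
      have : (critValue i j : ℂ) = critValue k l := by
        apply mul_right_cancel₀ hm
        linear_combination hv
      have : critValue i j = critValue k l := by exact_mod_cast this
      simpa [critPairs] using And.intro hij this
    · intro t
      fin_cases t <;> simp [ei, ej, ek, el]
  · rintro ⟨k, hk, hp⟩
    have hne : ∀ i, p i ≠ 0 := by
      intro i h
      have := hp i
      rw [h, zero_pow (by norm_num)] at this
      exact critCoord_ne_zero _ this.symm
    refine ⟨by simp [hne], (singular_iff_s8 p hne).2 ?_⟩
    obtain ⟨hk0, hk1⟩ := (Finset.mem_filter.1 hk).2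
    obtain ⟨c, v⟩ := crit_of_index hk0
    obtain ⟨c₂, v₂⟩ := crit_of_index (hk1 ▸ hk0)
    rw [hp, hp, hp, hp]
    refine ⟨c, c₂, ?_⟩
    rw [v, v₂, hk1]
    ring

lemma card_nthRoots_five {a : ℂ} (ha : a ≠ 0) : (Polynomial.nthRoots 5 a).toFinset.card = 5 := by
  have hz : IsPrimitiveRoot (Complex.exp (2 * Real.pi * Complex.I / (5 : ℕ))) 5 :=
    Complex.isPrimitiveRoot_exp 5 (by norm_num)
  obtain ⟨b, hb⟩ := IsAlgClosed.exists_pow_nat_eq a (n := 5) (by norm_num)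
  rw [Multiset.toFinset_card_of_nodup (hz.nthRoots_nodup ha), hz.card_nthRoots, if_pos ⟨b, hb⟩]

/-- The singular locus of the covering `Y` consists of exactly 8750 points: the set
of points of the torus (all coordinates nonzero) in `ℂ⁴` at which `H` and all four
of its partial derivatives vanish has exactly 8750 elements. -/
theorem card_singular_points_of_covering :
    {p : Fin 4 → ℂ | p 0 * p 1 * p 2 * p 3 ≠ 0 ∧ aeval p Hpoly = 0 ∧
      ∀ i : Fin 4, aeval p (pderiv i Hpoly) = 0}.ncard = 8750 := by
  classical
  let fib : (Fin 4 → Fin 4) → Finset (Fin 4 → ℂ) := fun k =>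
    Fintype.piFinset fun i => (Polynomial.nthRoots 5 (critCoord (k i))).toFinset
  have mem_fib : ∀ k p, p ∈ fib k ↔ ∀ i, p i ^ 5 = critCoord (k i) := by
    intro k p
    simp [fib, Fintype.mem_piFinset, Polynomial.mem_nthRoots]
  have hset : {p : Fin 4 → ℂ | p 0 * p 1 * p 2 * p 3 ≠ 0 ∧ aeval p Hpoly = 0 ∧
      ∀ i : Fin 4, aeval p (pderiv i Hpoly) = 0} = ↑(critPairs.biUnion fib) := by
    ext p
    rw [Set.mem_ofPred_eq, mem_singular_iff, Finset.mem_coe, Finset.mem_biUnion]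
    simp only [mem_fib]
  have hcard : ∀ k ∈ critPairs, (fib k).card = 625 := by
    intro k _
    simp [fib, Fintype.card_piFinset, card_nthRoots_five (critCoord_ne_zero _)]
  have hdisj : (critPairs : Set (Fin 4 → Fin 4)).PairwiseDisjoint fib := by
    intro k _ l _ hkl
    refine Finset.disjoint_left.2 fun p hp hq => hkl ?_
    funext i
    exact critCoord_injective (((mem_fib k p).1 hp i).symm.trans ((mem_fib l p).1 hq i))
  rw [hset, Set.ncard_coe_finset, Finset.card_biUnion hdisj, Finset.sum_congr rfl hcard,
    Finset.sum_const, card_critPairs]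
  norm_num
end

section
/- Let q be a prime power, let n ≥ 1, and define polynomials D_m over 𝔽_q by D_0 = 3, D_1 = x_1, D_2 = x_1² − 2x_2 and D_m = x_1·D_{m−1} − x_2·D_{m−2} for m ≥ 3 (these are the Dickson polynomials D_m^{(1)}(x_1,x_2,0)). Then the map 𝔽_q² → 𝔽_q² given by (u,v) ↦ (D_n(u,v), v^n) is a bijection if and only if gcd(n, q−1) = 1 and gcd(n, q²−1) = 1. -/
/-!
For `m ≥ 1` one has `D_m(α + β, αβ) = α ^ m + β ^ m` (`dickson0_add_mul`), so on the level of roots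
of `X² - uX + v` in an algebraic closure `K` of `F`, the vector acts by raising both roots to the
`n`-th power.

If `gcd(n, q² - 1) = 1`, then, since the roots of a quadratic over `F` satisfy `x ^ q² = x`
(`root_pow_card_sq`) and `x ↦ x ^ n` is injective on such elements
(`pow_injOn_of_coprime`), the roots, hence `(u, v)`, are determined by the image; injectivity
suffices as `F × F` is finite.

Conversely, if a prime `ℓ` divides both `n` and `q² - 1`, take a primitive `ℓ`-th root of unity
`ζ ∈ K`. Then `ζ ^ q² = ζ`, so `ζ + ζ ^ q` and `ζ * ζ ^ q` are Frobenius-invariant and lie in `F`.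
The pair they form has the same image as `(2, 1)`, which comes from the roots `1, 1`; injectivity
would force `ζ = 1`.
-/

/-- The Dickson polynomials `D_m^{(1)}(x_1,x_2,0)` of the first kind with parameter
`a = 0`, defined by `D_0 = 3`, `D_1 = x_1`, `D_2 = x_1² - 2x_2` and the recurrence
`D_m = x_1·D_{m-1} - x_2·D_{m-2}` for `m ≥ 3`. -/
def dickson0 {F : Type*} [Field F] : ℕ → F → F → F
  | 0, _, _ => 3
  | 1, u, _ => u
  | 2, u, v => u ^ 2 - 2 * v
  | n + 3, u, v => u * dickson0 (n + 2) u v - v * dickson0 (n + 1) u v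

/-- The values of the Dickson polynomials in terms of the roots `α, β` of `X² - uX + v` in an
extension. The case `m = 0` is excluded because `D_0 = 3` rather than `2`. -/
theorem dickson0_add_mul {F K : Type*} [Field F] [Field K] [Algebra F K] {u v : F} {α β : K}
    (hu : algebraMap F K u = α + β) (hv : algebraMap F K v = α * β) (m : ℕ) :
    algebraMap F K (dickson0 (m + 1) u v) = α ^ (m + 1) + β ^ (m + 1) := by
  induction m using Nat.twoStepInduction with
  | zero => simp [dickson0, hu]
  | one =>
    simp only [dickson0, map_sub, map_mul, map_pow, hu, hv, map_ofNat]
    ring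
  | more k h1 h2 =>
    have h : dickson0 (k + 2 + 1) u v = u * dickson0 (k + 2) u v - v * dickson0 (k + 1) u v := rfl
    rw [h, map_sub, map_mul, map_mul, h1, h2, hu, hv]
    ring

theorem exists_roots {F K : Type*} [Field F] [Field K] [Algebra F K] [IsAlgClosed K] (u v : F) :
    ∃ α β : K, algebraMap F K u = α + β ∧ algebraMap F K v = α * β := by
  obtain ⟨α, hα⟩ := IsAlgClosed.exists_root
    (Polynomial.X ^ 2 - Polynomial.C (algebraMap F K u) * Polynomial.X
      + Polynomial.C (algebraMap F K v)) (by
        have : (Polynomial.X ^ 2 - Polynomial.C (algebraMap F K u) * Polynomial.X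
          + Polynomial.C (algebraMap F K v)).degree = 2 := by compute_degree!
        rw [this]; decide)
  simp [Polynomial.IsRoot] at hα
  exact ⟨α, algebraMap F K u - α, by ring, by linear_combination hα⟩

theorem pair_eq_of_add_mul {K : Type*} [Field K] {a b c d : K} (h1 : a + b = c + d)
    (h2 : a * b = c * d) : (a = c ∧ b = d) ∨ (a = d ∧ b = c) := by
  have h : (a - c) * (a - d) = 0 := by linear_combination a * h1 - h2
  rcases mul_eq_zero.1 h with h | h
  · exact .inl ⟨by linear_combination h, by linear_combination h1 - h⟩
  · exact .inr ⟨by linear_combination h, by linear_combination h1 - h⟩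

/-- A root of a quadratic over `F` lies in the quadratic extension of `F`: the Frobenius permutes
the two roots, so its square fixes each of them. -/
theorem root_pow_card_sq {F K : Type*} [Field F] [Fintype F] [Field K] [Algebra F K] {u v : F}
    {α β : K} (hu : algebraMap F K u = α + β) (hv : algebraMap F K v = α * β) :
    α ^ (Fintype.card F ^ 2) = α := by
  have e1 : α ^ Fintype.card F + β ^ Fintype.card F = α + β := by
    have := (FiniteField.frobeniusAlgHom F K).commutes u
    rwa [hu, map_add] at this
  have e2 : α ^ Fintype.card F * β ^ Fintype.card F = α * β := by
    have := (FiniteField.frobeniusAlgHom F K).commutes v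
    rwa [hv, map_mul] at this
  rw [pow_two, pow_mul]
  rcases pair_eq_of_add_mul e1 e2 with ⟨h1, h2⟩ | ⟨h1, h2⟩
  · rw [h1, h1]
  · rw [h1, h2]

theorem pow_injOn_of_coprime {K : Type*} [Field K] {n Q : ℕ} (hQ : 2 < Q)
    (h : Nat.Coprime n (Q - 1)) {x y : K} (hx : x ^ Q = x) (hy : y ^ Q = y)
    (hxy : x ^ n = y ^ n) : x = y := by
  -- With `n * m ≡ 1` modulo `Q - 1`, the map `x ↦ x ^ m` inverts `x ↦ x ^ n`.
  obtain ⟨m, -, hm⟩ := Nat.exists_mul_mod_eq_one_of_coprime h (by omega)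
  have key : ∀ z : K, z ^ Q = z → (z ^ n) ^ m = z := by
    intro z hz
    have h1 : ∀ k : ℕ, z ^ ((Q - 1) * k + 1) = z := by
      intro k
      induction k with
      | zero => simp
      | succ k ih =>
        have : (Q - 1) * (k + 1) + 1 = (Q - 1) * k + 1 + (Q - 1) := by ring
        rw [this, pow_add, ih, ← pow_succ', Nat.sub_add_cancel (by omega), hz]
    rw [← pow_mul, ← Nat.div_add_mod (n * m) (Q - 1), hm, h1]
  rw [← key x hx, ← key y hy, hxy]

theorem mem_range_of_pow_card {F K : Type*} [Field F] [Fintype F] [Field K] [Algebra F K] {x : K}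
    (hx : x ^ Fintype.card F = x) : ∃ a : F, algebraMap F K a = x := by
  classical
  by_contra! hne
  -- Otherwise `X ^ q - X` would have `q + 1` distinct roots in `K`.
  have hle : (insert x (Finset.univ.image (algebraMap F K))).card
      ≤ (Polynomial.X ^ Fintype.card F - Polynomial.X : Polynomial K).natDegree := by
    apply Polynomial.card_le_degree_of_subset_roots
    intro y hy
    rw [Polynomial.mem_roots (FiniteField.X_pow_card_sub_X_ne_zero K Fintype.one_lt_card)]
    simp only [Finset.insert_val, Multiset.mem_ndinsert, Finset.mem_val, Finset.mem_image,
      Finset.mem_univ, true_and] at hy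
    rcases hy with rfl | ⟨a, rfl⟩
    · simp [hx]
    · simp [← map_pow, FiniteField.pow_card]
  rw [FiniteField.X_pow_card_sub_X_natDegree_eq K Fintype.one_lt_card,
    Finset.card_insert_of_notMem (by simpa using hne),
    Finset.card_image_of_injective _ (algebraMap F K).injective, Finset.card_univ] at hle
  omega

theorem coprime_of_injective {F : Type*} [Field F] [Fintype F] {n : ℕ} (hn : 1 ≤ n)
    (hinj : Function.Injective (fun p : F × F => (dickson0 n p.1 p.2, p.2 ^ n))) :
    Nat.Coprime n (Fintype.card F ^ 2 - 1) := by
  have hq : 1 < Fintype.card F := Fintype.one_lt_card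
  have hq2 : 1 ≤ Fintype.card F ^ 2 := Nat.one_le_pow _ _ (by omega)
  refine Nat.Coprime.symm (Nat.coprime_of_dvd fun ℓ hℓ hℓq hℓn => ?_)
  let K := AlgebraicClosure F
  have hℓK : NeZero (ℓ : K) := by
    refine ⟨fun h0 => ?_⟩
    obtain ⟨c, hc⟩ := hℓq
    have h1 : Fintype.card F ^ 2 = ℓ * c + 1 := by omega
    have h2 : ((Fintype.card F : ℕ) : K) = 0 := by
      rw [← map_natCast (algebraMap F K), FiniteField.cast_card_eq_zero, map_zero]
    have h3 := congrArg (Nat.cast : ℕ → K) h1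
    rw [Nat.cast_pow, Nat.cast_add, Nat.cast_mul, h2, h0] at h3
    simp at h3
  obtain ⟨ζ, hζ⟩ := HasEnoughRootsOfUnity.exists_primitiveRoot K ℓ
  have hζn : ζ ^ n = 1 := (hζ.pow_eq_one_iff_dvd n).2 hℓn
  have hζQ : (ζ ^ Fintype.card F) ^ Fintype.card F = ζ := by
    rw [← pow_mul, ← pow_two, ← Nat.sub_add_cancel hq2, pow_succ,
      (hζ.pow_eq_one_iff_dvd _).2 hℓq, one_mul]
  have hζqn : (ζ ^ Fintype.card F) ^ n = 1 := by rw [← pow_mul, mul_comm, pow_mul, hζn, one_pow]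
  obtain ⟨u, hu⟩ : ∃ u : F, algebraMap F K u = ζ + ζ ^ Fintype.card F := by
    apply mem_range_of_pow_card
    have := map_add (FiniteField.frobeniusAlgHom F K) ζ (ζ ^ Fintype.card F)
    simp only [FiniteField.coe_frobeniusAlgHom] at this
    rw [this, hζQ, add_comm]
  obtain ⟨v, hv⟩ : ∃ v : F, algebraMap F K v = ζ * ζ ^ Fintype.card F := by
    apply mem_range_of_pow_card
    rw [mul_pow, hζQ, mul_comm]
  have hu1 : algebraMap F K 2 = 1 + 1 := by rw [map_ofNat]; norm_num
  have hv1 : algebraMap F K 1 = 1 * 1 := by simp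
  obtain ⟨m, rfl⟩ := Nat.exists_eq_add_of_le' hn
  have himg : ((u, v) : F × F) = (2, 1) := by
    apply hinj
    refine Prod.ext ?_ ?_ <;> apply (algebraMap F K).injective
    · simp only
      rw [dickson0_add_mul hu hv, dickson0_add_mul hu1 hv1, hζn, hζqn, one_pow]
    · simp only
      rw [map_pow, hv, mul_pow, hζn, hζqn]
      simp
  obtain ⟨rfl, rfl⟩ := Prod.mk.inj himg
  have h1 : ζ = 1 := by
    rcases pair_eq_of_add_mul (hu.symm.trans hu1) (hv.symm.trans hv1) with h | h
    · exact h.1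
    · exact h.1
  exact hζ.ne_one hℓ.one_lt h1

theorem injective_of_coprime {F : Type*} [Field F] [Fintype F] {n : ℕ} (hn : 1 ≤ n)
    (hcop : Nat.Coprime n (Fintype.card F ^ 2 - 1)) :
    Function.Injective (fun p : F × F => (dickson0 n p.1 p.2, p.2 ^ n)) := by
  have hq : 1 < Fintype.card F := Fintype.one_lt_card
  have hQ : 2 < Fintype.card F ^ 2 := by nlinarith
  let K := AlgebraicClosure F
  rintro ⟨u, v⟩ ⟨u', v'⟩ h
  obtain ⟨α, β, hu, hv⟩ := exists_roots (K := K) u v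
  obtain ⟨γ, δ, hu', hv'⟩ := exists_roots (K := K) u' v'
  have hα := root_pow_card_sq hu hv
  have hβ := root_pow_card_sq (hu.trans (add_comm _ _)) (hv.trans (mul_comm _ _))
  have hγ := root_pow_card_sq hu' hv'
  have hδ := root_pow_card_sq (hu'.trans (add_comm _ _)) (hv'.trans (mul_comm _ _))
  obtain ⟨h1, h2⟩ := Prod.mk.inj h
  have e2 : α ^ n * β ^ n = γ ^ n * δ ^ n := by
    have := congrArg (algebraMap F K) h2
    simpa only [map_pow, hv, hv', mul_pow] using this
  have e1 : α ^ n + β ^ n = γ ^ n + δ ^ n := by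
    obtain ⟨m, rfl⟩ := Nat.exists_eq_add_of_le' hn
    rw [← dickson0_add_mul hu hv, ← dickson0_add_mul hu' hv']
    exact congrArg (algebraMap F K) h1
  refine Prod.ext ?_ ?_ <;> apply (algebraMap F K).injective <;> simp only [hu, hv, hu', hv'] <;>
    rcases pair_eq_of_add_mul e1 e2 with ⟨ha, hb⟩ | ⟨ha, hb⟩
  · rw [pow_injOn_of_coprime hQ hcop hα hγ ha, pow_injOn_of_coprime hQ hcop hβ hδ hb]
  · rw [pow_injOn_of_coprime hQ hcop hα hδ ha, pow_injOn_of_coprime hQ hcop hβ hγ hb,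
      add_comm]
  · rw [pow_injOn_of_coprime hQ hcop hα hγ ha, pow_injOn_of_coprime hQ hcop hβ hδ hb]
  · rw [pow_injOn_of_coprime hQ hcop hα hδ ha, pow_injOn_of_coprime hQ hcop hβ hγ hb,
      mul_comm]

/-- The Dickson polynomial vector `D(2,n,0) = (D_n^{(1)}(·,·,0), D_n^{(2)}(·,·,0))`,
where `D_n^{(2)}(x_1,x_2,0) = x_2^n`, permutes `𝔽_q²` if and only if
`gcd(n, q-1) = 1` and `gcd(n, q²-1) = 1`. -/
theorem dickson_vector_bijective_iff {F : Type*} [Field F] [Fintype F]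
    (n : ℕ) (hn : 1 ≤ n) :
    Function.Bijective (fun p : F × F => (dickson0 n p.1 p.2, p.2 ^ n)) ↔
      Nat.gcd n (Fintype.card F - 1) = 1 ∧ Nat.gcd n (Fintype.card F ^ 2 - 1) = 1 := by
  constructor
  · intro h
    have hcop := coprime_of_injective hn h.1
    have hdvd : Fintype.card F - 1 ∣ Fintype.card F ^ 2 - 1 := by
      simpa using Nat.sub_dvd_pow_sub_pow (Fintype.card F) 1 2
    exact ⟨hcop.coprime_dvd_right hdvd, hcop⟩
  · rintro ⟨-, h⟩
    exact Finite.injective_iff_bijective.1 (injective_of_coprime hn h)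
end

section
/- Let q be a prime power with gcd(q,30) = 1 and q ≡ 2 or 3 (mod 5). Then the map 𝔽_q² → 𝔽_q² sending (x_1,x_2) to (D^{(1)}(x_1,x_2), D^{(2)}(x_1,x_2)), where D^{(1)}(x_1,x_2) = x_1^5 − 5x_1^3 x_2 + 5x_1 x_2^2 + 5x_1^2 − 5x_2 and D^{(2)}(x_1,x_2) = x_2^5 − 5x_1 x_2^3 + 5x_1^2 x_2 + 5x_2^2 − 5x_1, is a bijection. -/
/-!
Injectivity suffices, as `F × F` is finite. Write `q = |F|`. A pair `(a, b)` is recovered from the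
roots `y₁, y₂, y₃` (with `y₁ y₂ y₃ = 1`) of `T³ - a T² + b T - 1` in an algebraic closure of `F`,
and the Dickson map sends `(a, b)` to the pair attached to `y₁⁵, y₂⁵, y₃⁵`. Hence the image
determines the multiset of the `yᵢ⁵` (`multiset_eq_of_symm`). Each `yᵢ` has degree at most `3` over
`F`, so it satisfies `y ^ q⁶ = y` (`pow_card_pow_six`). Since `q` has order `4` modulo `5`,
`q⁶ - 1 ≡ -2` is prime to `5`, so fifth roots within the field of `q⁶` elements are unique: there
is one exponent `m` with `(yᵢ⁵) ^ m = yᵢ` (`exists_inverse_exponent`). So the multiset of the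
`yᵢ`, and with it `(a, b)`, is determined by the image.
-/

open Polynomial in
/-- Over an algebraically closed field, `a` and `b` are the first two elementary symmetric
functions of three elements of product `1`, namely the roots of `T³ - a T² + b T - 1`. -/
lemma exists_three_roots {F K : Type*} [Field F] [Field K] [IsAlgClosed K] [Algebra F K]
    (a b : F) : ∃ x y z : K, algebraMap F K a = x + y + z ∧
      algebraMap F K b = x * y + x * z + y * z ∧ x * y * z = 1 := by
  have ha : (⟨1, -a, b, -1⟩ : Cubic F).a ≠ 0 := one_ne_zero
  obtain ⟨x, y, z, h⟩ := (Cubic.splits_iff_roots_eq_three (φ := algebraMap F K) ha).1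
    (IsAlgClosed.splits _)
  have h1 := Cubic.b_eq_three_roots ha h
  have h2 := Cubic.c_eq_three_roots ha h
  have h3 := Cubic.d_eq_three_roots ha h
  simp only [map_one, map_neg] at h1 h2 h3
  exact ⟨x, y, z, by linear_combination -h1, by linear_combination h2, by linear_combination h3⟩

open Polynomial IntermediateField in
/-- A root of a cubic over `F` has degree `1`, `2` or `3` over `F`, hence is fixed by the sixth
power of the `q`-Frobenius. -/
lemma pow_card_pow_six {F K : Type*} [Field F] [Fintype F] [Field K] [Algebra F K]
    (a b : F) (y : K)
    (hy : y ^ 3 - algebraMap F K a * y ^ 2 + algebraMap F K b * y - 1 = 0) :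
    y ^ (Fintype.card F ^ 6) = y := by
  set p : F[X] := X ^ 3 - C a * X ^ 2 + C b * X - 1 with hp
  have hdeg : p.natDegree = 3 := by rw [hp]; compute_degree!
  have hp0 : p ≠ 0 := by
    intro h
    simp [h] at hdeg
  have hroot : aeval y p = 0 := by simpa [hp] using hy
  have hint : IsIntegral F y := IsAlgebraic.isIntegral ⟨p, hp0, hroot⟩
  have hle : (minpoly F y).natDegree ≤ 3 := by
    rw [← hdeg]
    exact natDegree_le_of_dvd (minpoly.dvd F y hroot) hp0
  have hpos := minpoly.natDegree_pos hint
  have := adjoin.finiteDimensional hint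
  have : Finite F⟮y⟯ := Module.finite_of_finite F
  have := Fintype.ofFinite F⟮y⟯
  have hcard : Fintype.card F⟮y⟯ = Fintype.card F ^ (minpoly F y).natDegree := by
    rw [← adjoin.finrank hint]
    exact Module.card_eq_pow_finrank
  obtain ⟨k, hk⟩ : (minpoly F y).natDegree ∣ 6 := by
    interval_cases (minpoly F y).natDegree <;> decide
  have h := FiniteField.pow_card_pow k (AdjoinSimple.gen F y)
  rw [hcard, ← pow_mul, ← hk] at h
  simpa using congrArg (algebraMap F⟮y⟯ K) h

lemma exists_inverse_exponent (q : ℕ) (h5 : q % 5 = 2 ∨ q % 5 = 3) :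
    ∃ m : ℕ, ∀ {K : Type*} [Field K] (y : K), y ≠ 0 → y ^ (q ^ 6) = y → (y ^ 5) ^ m = y := by
  have hmod : q ^ 6 % 5 = 4 := by
    rcases h5 with h | h <;> simp [Nat.pow_mod, h]
  -- As `q ^ 6 ≡ 4 (mod 5)`, the number `1 + 3 * (q ^ 6 - 1)` is a multiple `5 * m` of `5`.
  obtain ⟨n, hn⟩ : ∃ n, q ^ 6 = 5 * n + 4 := ⟨q ^ 6 / 5, by omega⟩
  refine ⟨3 * n + 2, fun {K} _ y hy h => ?_⟩
  rw [hn] at h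
  have h1 : y ^ (5 * n + 3) = 1 := by
    apply mul_right_cancel₀ hy
    rw [← pow_succ, one_mul, h]
  calc (y ^ 5) ^ (3 * n + 2) = (y ^ (5 * n + 3)) ^ 3 * y := by ring
    _ = y := by rw [h1]; ring

open Polynomial in
/-- The elementary symmetric functions of three elements determine them up to order. -/
lemma multiset_eq_of_symm {K : Type*} [Field K] {x y z x' y' z' : K}
    (h1 : x + y + z = x' + y' + z')
    (h2 : x * y + x * z + y * z = x' * y' + x' * z' + y' * z')
    (h3 : x * y * z = x' * y' * z') :
    ({x, y, z} : Multiset K) = {x', y', z'} := by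
  rw [← roots_multiset_prod_X_sub_C {x, y, z}, ← roots_multiset_prod_X_sub_C {x', y', z'}]
  congr 1
  have e1 := congrArg (C : K → K[X]) h1
  have e2 := congrArg (C : K → K[X]) h2
  have e3 := congrArg (C : K → K[X]) h3
  simp only [map_add, map_mul] at e1 e2 e3
  simp only [Multiset.insert_eq_cons, Multiset.map_cons, Multiset.map_singleton,
    Multiset.prod_cons, Multiset.prod_singleton]
  linear_combination -X ^ 2 * e1 + X * e2 - e3

/-- For a finite field `𝔽_q` with `gcd(q,30) = 1` and `q ≡ 2` or `3 (mod 5)`, the map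
`(x_1,x_2) ↦ (D^{(1)}(x_1,x_2), D^{(2)}(x_1,x_2))` given by the two degree-5 Dickson
polynomials of the first kind with parameter `a = 1` is a bijection of `𝔽_q²`. -/
theorem dickson5_vector_bijective {F : Type*} [Field F] [Fintype F]
    (h30 : Nat.gcd (Fintype.card F) 30 = 1)
    (h5 : Fintype.card F % 5 = 2 ∨ Fintype.card F % 5 = 3) :
    Function.Bijective (fun p : F × F =>
      (p.1 ^ 5 - 5 * p.1 ^ 3 * p.2 + 5 * p.1 * p.2 ^ 2 + 5 * p.1 ^ 2 - 5 * p.2,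
       p.2 ^ 5 - 5 * p.1 * p.2 ^ 3 + 5 * p.1 ^ 2 * p.2 + 5 * p.2 ^ 2 - 5 * p.1)) := by
  apply Finite.injective_iff_bijective.1
  obtain ⟨m, hm⟩ := exists_inverse_exponent _ h5
  -- The roots attached to `(a, b)`, with the symmetric functions of their fifth powers.
  have key : ∀ a b : F, ∃ x y z : AlgebraicClosure F,
      algebraMap F _ a = x + y + z ∧ algebraMap F _ b = x * y + x * z + y * z ∧
      ((x ^ 5) ^ m = x ∧ (y ^ 5) ^ m = y ∧ (z ^ 5) ^ m = z) ∧
      x ^ 5 + y ^ 5 + z ^ 5 = algebraMap F _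
        (a ^ 5 - 5 * a ^ 3 * b + 5 * a * b ^ 2 + 5 * a ^ 2 - 5 * b) ∧
      x ^ 5 * y ^ 5 + x ^ 5 * z ^ 5 + y ^ 5 * z ^ 5 = algebraMap F _
        (b ^ 5 - 5 * a * b ^ 3 + 5 * a ^ 2 * b + 5 * b ^ 2 - 5 * a) ∧
      x ^ 5 * y ^ 5 * z ^ 5 = 1 := by
    intro a b
    obtain ⟨x, y, z, ha, hb, hc⟩ := exists_three_roots (K := AlgebraicClosure F) a b
    have hx : x ≠ 0 := by rintro rfl; simp at hc
    have hy : y ≠ 0 := by rintro rfl; simp at hc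
    have hz : z ≠ 0 := by rintro rfl; simp at hc
    refine ⟨x, y, z, ha, hb, ⟨?_, ?_, ?_⟩, ?_, ?_, ?_⟩
    · refine hm x hx (pow_card_pow_six a b x ?_)
      rw [ha, hb]; linear_combination hc
    · refine hm y hy (pow_card_pow_six a b y ?_)
      rw [ha, hb]; linear_combination hc
    · refine hm z hz (pow_card_pow_six a b z ?_)
      rw [ha, hb]; linear_combination hc
    · -- Newton's identity for `p₅`, homogenized by `e₃ = x * y * z = 1`.
      simp only [map_add, map_sub, map_mul, map_pow, map_ofNat, ha, hb]
      linear_combination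
        (5 * (x + y + z) ^ 2 - 5 * (x * y + x * z + y * z)) * hc
    · -- Newton's identity for `p₅` of the pairwise products, whose elementary symmetric functions
      -- are `e₂`, `e₁ e₃`, `e₃²`.
      simp only [map_add, map_sub, map_mul, map_pow, map_ofNat, ha, hb]
      set e := x * y * z with he
      linear_combination
        (- 5 * (x + y + z) * (x * y + x * z + y * z) ^ 3
          + 5 * (x + y + z) ^ 2 * (x * y + x * z + y * z) * (e + 1)
          + 5 * (x * y + x * z + y * z) ^ 2 * (e + 1)
          - 5 * (x + y + z) * (e ^ 2 + e + 1)) * hc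
    · rw [← mul_pow, ← mul_pow, hc, one_pow]
  rintro ⟨a, b⟩ ⟨a', b'⟩ h
  obtain ⟨h1, h2⟩ := Prod.mk.inj h
  obtain ⟨x, y, z, ha, hb, ⟨hx, hy, hz⟩, s1, s2, s3⟩ := key a b
  obtain ⟨x', y', z', ha', hb', ⟨hx', hy', hz'⟩, s1', s2', s3'⟩ := key a' b'
  have hfifth := multiset_eq_of_symm
    (s1.trans ((congrArg _ h1).trans s1'.symm)) (s2.trans ((congrArg _ h2).trans s2'.symm))
    (s3.trans s3'.symm)
  have hroots : ({x, y, z} : Multiset (AlgebraicClosure F)) = {x', y', z'} := by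
    simpa [hx, hy, hz, hx', hy', hz'] using congrArg (Multiset.map (· ^ m)) hfifth
  have hsum : x + y + z = x' + y' + z' := by
    simpa [add_assoc] using congrArg Multiset.sum hroots
  have hprod : x * y * z = x' * y' * z' := by
    simpa [mul_assoc] using congrArg Multiset.prod hroots
  -- `(1 + x)(1 + y)(1 + z) = 1 + e₁ + e₂ + e₃` recovers `e₂` in every characteristic.
  have hone : (1 + x) * (1 + y) * (1 + z) = (1 + x') * (1 + y') * (1 + z') := by
    have := congrArg (fun s => (Multiset.map (1 + ·) s).prod) hroots
    simp only [Multiset.insert_eq_cons, Multiset.map_cons, Multiset.map_singleton,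
      Multiset.prod_cons, Multiset.prod_singleton] at this
    linear_combination this
  have hinj := (algebraMap F (AlgebraicClosure F)).injective
  refine Prod.ext (hinj (by rw [ha, ha', hsum])) (hinj ?_)
  rw [hb, hb']
  linear_combination hone - hsum - hprod
end

section
/- Let q be a prime power with gcd(q,30) = 1 and q ≡ 2 or 3 (mod 5). Then the number of solutions (x_1,x_2,x_4,x_5) ∈ 𝔽_q⁴ of the equation P_5(x_1,x_2) = P_5(x_4,x_5) is exactly q³. -/
/-- The power sum `a⁵ + b⁵ + c⁵` in terms of `x = a + b + c` and `y = ab + bc + ca`, given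
`abc = 1`. -/
def powerSum5 {R : Type*} [CommRing R] (x y : R) : R :=
  x ^ 5 - 5 * x ^ 3 * y + 5 * x * y ^ 2 + 5 * x ^ 2 - 5 * y

/-- The two-variable Dickson map of degree 5. -/
def dickson5 {R : Type*} [CommRing R] (p : R × R) : R × R :=
  (powerSum5 p.1 p.2, powerSum5 p.2 p.1)

lemma P5_eq_dickson5 {R : Type*} [CommRing R] (x y : R) :
    P5 x y = (dickson5 (x, y)).1 + (dickson5 (x, y)).2 := by
  simp only [P5, dickson5, powerSum5]
  ring

lemma powerSum5_eq_sum {R : Type*} [CommRing R] {a b c : R} (h : a * b * c = 1) :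
    powerSum5 (a + b + c) (a * b + a * c + b * c) = a ^ 5 + b ^ 5 + c ^ 5 := by
  have h1 : a ^ 5 + b ^ 5 + c ^ 5 = (a + b + c) ^ 5
      - 5 * (a + b + c) ^ 3 * (a * b + a * c + b * c)
      + 5 * (a + b + c) * (a * b + a * c + b * c) ^ 2
      + 5 * (a + b + c) ^ 2 * (a * b * c)
      - 5 * (a * b + a * c + b * c) * (a * b * c) := by ring
  rw [h1, h, powerSum5]
  ring

/-- The previous lemma applied to the inverses `bc, ac, ab` of `a, b, c`. -/
lemma powerSum5_swap_eq_sum {R : Type*} [CommRing R] {a b c : R} (h : a * b * c = 1) :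
    powerSum5 (a * b + a * c + b * c) (a + b + c)
      = a ^ 5 * b ^ 5 + a ^ 5 * c ^ 5 + b ^ 5 * c ^ 5 := by
  have h1 := powerSum5_eq_sum (a := a * b) (b := a * c) (c := b * c)
    (by linear_combination (a * b * c + 1) * h)
  have h2 : a * b * (a * c) + a * b * (b * c) + a * c * (b * c) = a + b + c := by
    linear_combination (a + b + c) * h
  rw [h2] at h1
  rw [h1]
  ring

/-- An element of degree at most 3 over `F` lies in the extension of degree 6. -/
lemma pow_card_pow_six_of_cubic {F K : Type*} [Field F] [Fintype F] [Field K] [Algebra F K]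
    {a : K} {g : Polynomial F} (hg : g ≠ 0) (hdeg : g.natDegree ≤ 3)
    (ha : Polynomial.aeval a g = 0) : a ^ (Fintype.card F ^ 6) = a := by
  have hint : IsIntegral F a := (IsAlgebraic.isIntegral ⟨g, hg, ha⟩)
  have hd : Module.finrank F (IntermediateField.adjoin F {a}) ≤ 3 := by
    rw [IntermediateField.adjoin.finrank hint]
    exact (Polynomial.natDegree_le_of_dvd (minpoly.dvd F a ha) hg).trans hdeg
  have : FiniteDimensional F (IntermediateField.adjoin F {a}) :=
    IntermediateField.adjoin.finiteDimensional hint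
  have hpos : 0 < Module.finrank F (IntermediateField.adjoin F {a}) := Module.finrank_pos
  have : Finite (IntermediateField.adjoin F {a}) := Module.finite_of_finite F
  have := Fintype.ofFinite (IntermediateField.adjoin F {a})
  have hcard := Module.card_eq_pow_finrank (K := F) (V := IntermediateField.adjoin F {a})
  set d := Module.finrank F (IntermediateField.adjoin F {a}) with hddef
  obtain ⟨k, hk⟩ : d ∣ 6 := by interval_cases d <;> decide
  have h := FiniteField.pow_card_pow k (IntermediateField.AdjoinSimple.gen F a)
  rw [hcard, ← pow_mul, ← hk] at h
  simpa using congrArg (algebraMap (IntermediateField.adjoin F {a}) K) h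

/-- The roots `a, b, c` of `T³ - xT² + yT - 1` in the algebraic closure: Vieta's relations, and
the fact that the roots lie in the extension of degree 6. -/
lemma exists_roots_s11 {F : Type*} [Field F] [Fintype F] (x y : F) :
    ∃ a b c : AlgebraicClosure F,
      algebraMap F (AlgebraicClosure F) x = a + b + c ∧
      algebraMap F (AlgebraicClosure F) y = a * b + a * c + b * c ∧
      a * b * c = 1 ∧
      ∀ z ∈ ({a, b, c} : Multiset (AlgebraicClosure F)), z ^ (Fintype.card F ^ 6) = z := by
  let P : Cubic F := ⟨1, -x, y, -1⟩
  have hP : P.a ≠ 0 := one_ne_zero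
  obtain ⟨a, b, c, h⟩ := (Cubic.splits_iff_roots_eq_three (φ := algebraMap F (AlgebraicClosure F))
    hP).1 (IsAlgClosed.splits _)
  have hb := Cubic.b_eq_three_roots hP h
  have hc := Cubic.c_eq_three_roots hP h
  have hd := Cubic.d_eq_three_roots hP h
  simp only [P, map_neg, map_one] at hb hc hd
  refine ⟨a, b, c, by linear_combination -hb, by linear_combination hc,
    by linear_combination hd, fun z hz => ?_⟩
  rw [← h, Cubic.map_roots] at hz
  refine pow_card_pow_six_of_cubic (g := P.toPoly) (Cubic.ne_zero_of_a_ne_zero hP)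
    (Cubic.natDegree_of_a_ne_zero hP).le ?_
  have := Polynomial.isRoot_of_mem_roots hz
  rwa [Polynomial.IsRoot, Polynomial.eval_map_algebraMap] at this

lemma multiset_eq_of_esymm {K : Type*} [Field K] {a b c a' b' c' : K}
    (h1 : a + b + c = a' + b' + c')
    (h2 : a * b + a * c + b * c = a' * b' + a' * c' + b' * c')
    (h3 : a * b * c = a' * b' * c') :
    ({a, b, c} : Multiset K) = {a', b', c'} := by
  open Polynomial in
  have key : ∀ u v w : K, (({u, v, w} : Multiset K).map fun z => X - C z).prod
      = X ^ 3 - C (u + v + w) * X ^ 2 + C (u * v + u * w + v * w) * X - C (u * v * w) := by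
    intro u v w
    simp
    ring
  have h := (key a b c).trans ((by rw [h1, h2, h3]) : _ = _) |>.trans (key a' b' c').symm
  simpa only [Polynomial.roots_multiset_prod_X_sub_C] using congrArg Polynomial.roots h

lemma dickson5_injective {F : Type*} [Field F] [Fintype F]
    (h5 : Fintype.card F % 5 = 2 ∨ Fintype.card F % 5 = 3) :
    Function.Injective (dickson5 : F × F → F × F) := by
  obtain ⟨m, hm⟩ : ∃ m, 3 * Fintype.card F ^ 6 = 5 * m + 2 := by
    have : 3 * Fintype.card F ^ 6 % 5 = 2 := by
      rcases h5 with h | h <;> simp [Nat.mul_mod, Nat.pow_mod, h]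
    exact ⟨3 * Fintype.card F ^ 6 / 5, by omega⟩
  -- On the field with `q⁶` elements, `z ↦ zᵐ` inverts the fifth power map.
  have hinv : ∀ z : AlgebraicClosure F, z ≠ 0 → z ^ (Fintype.card F ^ 6) = z →
      (z ^ 5) ^ m = z := by
    intro z hz h
    have h' : z ^ (5 * m + 2) = z ^ 3 := by rw [← hm, mul_comm, pow_mul, h]
    rw [← pow_mul]
    apply mul_right_cancel₀ (pow_ne_zero 2 hz)
    rw [← pow_add, h']
    ring
  have hmap : ∀ a b c : AlgebraicClosure F, a * b * c = 1 →
      (∀ z ∈ ({a, b, c} : Multiset (AlgebraicClosure F)), z ^ (Fintype.card F ^ 6) = z) →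
      ({a ^ 5, b ^ 5, c ^ 5} : Multiset (AlgebraicClosure F)).map (· ^ m) = {a, b, c} := by
    intro a b c h hz
    have ha : a ≠ 0 := by rintro rfl; simp at h
    have hb : b ≠ 0 := by rintro rfl; simp at h
    have hc : c ≠ 0 := by rintro rfl; simp at h
    simp [hinv a ha (hz a (by simp)), hinv b hb (hz b (by simp)), hinv c hc (hz c (by simp))]
  rintro ⟨x, y⟩ ⟨x', y'⟩ h
  obtain ⟨a, b, c, hx, hy, h1, hr⟩ := exists_roots_s11 x y
  obtain ⟨a', b', c', hx', hy', h1', hr'⟩ := exists_roots_s11 x' y'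
  have hcomm : ∀ u v : F, algebraMap F (AlgebraicClosure F) (powerSum5 u v)
      = powerSum5 (algebraMap F (AlgebraicClosure F) u) (algebraMap F (AlgebraicClosure F) v) := by
    intro u v
    simp only [powerSum5, map_sub, map_add, map_mul, map_pow, map_ofNat]
  simp only [dickson5, Prod.mk.injEq] at h
  have e1 := congrArg (algebraMap F (AlgebraicClosure F)) h.1
  have e2 := congrArg (algebraMap F (AlgebraicClosure F)) h.2
  rw [hcomm, hcomm, hx, hy, hx', hy', powerSum5_eq_sum h1, powerSum5_eq_sum h1'] at e1
  rw [hcomm, hcomm, hx, hy, hx', hy', powerSum5_swap_eq_sum h1, powerSum5_swap_eq_sum h1'] at e2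
  have hs := multiset_eq_of_esymm e1 e2 (by simp only [← mul_pow, h1, h1'])
  have hroots : ({a, b, c} : Multiset (AlgebraicClosure F)) = {a', b', c'} := by
    rw [← hmap a b c h1 hr, hs, hmap a' b' c' h1' hr']
  have s1 := congrArg Multiset.sum hroots
  -- As `abc = 1`, the second elementary symmetric function is the sum of the inverses.
  have s2 := congrArg (fun s => (s.map (·⁻¹)).sum) hroots
  have hinvsum : ∀ a b c : AlgebraicClosure F, a * b * c = 1 →
      a⁻¹ + (b⁻¹ + c⁻¹) = a * b + a * c + b * c := by
    intro a b c h
    rw [inv_eq_of_mul_eq_one_right (a := a) (b := b * c) (by linear_combination h),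
      inv_eq_of_mul_eq_one_right (a := b) (b := a * c) (by linear_combination h),
      inv_eq_of_mul_eq_one_right (a := c) (b := a * b) (by linear_combination h)]
    ring
  simp at s1 s2
  rw [hinvsum a b c h1, hinvsum a' b' c' h1', ← hy, ← hy'] at s2
  rw [← add_assoc, ← add_assoc, ← hx, ← hx'] at s1
  exact Prod.ext ((algebraMap F (AlgebraicClosure F)).injective s1)
    ((algebraMap F (AlgebraicClosure F)).injective s2)

lemma dickson5_bijective {F : Type*} [Field F] [Fintype F]
    (h5 : Fintype.card F % 5 = 2 ∨ Fintype.card F % 5 = 3) :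
    Function.Bijective (dickson5 : F × F → F × F) :=
  Finite.injective_iff_bijective.1 (dickson5_injective h5)

/-- For a finite field `𝔽_q` with `gcd(q,30) = 1` and `q ≡ 2` or `3 (mod 5)`, the
equation `P_5(x_1,x_2) = P_5(x_4,x_5)` has exactly `q³` solutions in `𝔽_q⁴`. -/
theorem card_solutions_chebyshev_equation {F : Type*} [Field F] [Fintype F]
    (h30 : Nat.gcd (Fintype.card F) 30 = 1)
    (h5 : Fintype.card F % 5 = 2 ∨ Fintype.card F % 5 = 3) :
    Nat.card {p : Fin 4 → F // P5 (p 0) (p 1) = P5 (p 2) (p 3)}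
      = Fintype.card F ^ 3 := by
  have hD := dickson5_bijective h5
  -- In the new coordinates the last one is determined by the other three.
  let φ : {p : Fin 4 → F // P5 (p 0) (p 1) = P5 (p 2) (p 3)} → (F × F) × F :=
    fun p => (dickson5 (p.1 0, p.1 1), (dickson5 (p.1 2, p.1 3)).1)
  have hφ : Function.Bijective φ := by
    constructor
    · rintro ⟨p, hp⟩ ⟨r, hr⟩ h
      simp only [φ, Prod.mk.injEq] at h
      obtain ⟨h1, h2⟩ := h
      rw [P5_eq_dickson5, P5_eq_dickson5] at hp hr
      have h3 : dickson5 (p 2, p 3) = dickson5 (r 2, r 3) := by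
        refine Prod.ext h2 ?_
        rw [h1] at hp
        linear_combination hr - hp - h2
      have e1 := hD.1 h1
      have e2 := hD.1 h3
      simp only [Prod.mk.injEq] at e1 e2
      apply Subtype.ext
      funext i
      fin_cases i
      exacts [e1.1, e1.2, e2.1, e2.2]
    · rintro ⟨u, v⟩
      obtain ⟨⟨a, b⟩, hab⟩ := hD.2 u
      obtain ⟨⟨c, d⟩, hcd⟩ := hD.2 (v, u.1 + u.2 - v)
      refine ⟨⟨![a, b, c, d], ?_⟩, ?_⟩
      · simp [P5_eq_dickson5, hab, hcd]
      · simp [φ, hab, hcd]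
  rw [Nat.card_eq_of_bijective φ hφ]
  simp only [Nat.card_eq_fintype_card, Fintype.card_prod]
  ring
end

section
/- Let F = ℚ(√5) (the real quadratic field generated over ℚ by √5 inside ℝ) and let w = (1+√5)/2 ∈ F. Then the quaternion algebra B = (−6, w−3) over F — the F-algebra with basis 1, X, Y, XY subject to X² = −6, Y² = w − 3 = √5·(1−√5)/2, and XY = −YX — is a division algebra: every nonzero element of B is invertible. -/
/-!
Under the inclusion `F5 ⊆ ℝ` both `-6` and `w - 3` are negative, because `√5 < 3`. The reduced norm
`a² + 6 b² + (3 - w) c² + 6 (3 - w) d²` of `a + bX + cY + dXY` is therefore positive definite over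
the reals (`norm_ne_zero`), hence anisotropic over `F5`. A nonzero element `x` then has inverse
`star x` divided by its reduced norm.
-/

open Quaternion IntermediateField

/-- `F = ℚ(√5)`, the real quadratic field generated over `ℚ` by `√5` inside `ℝ`. -/
noncomputable abbrev F5 : IntermediateField ℚ ℝ := ℚ⟮(Real.sqrt 5 : ℝ)⟯

/-- `√5` as an element of `F = ℚ(√5)`. -/
noncomputable def sqrt5 : F5 :=
  ⟨Real.sqrt 5, IntermediateField.mem_adjoin_simple_self ℚ (Real.sqrt 5)⟩

/-- The fundamental unit `w = (1 + √5)/2` of `F = ℚ(√5)`. -/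
noncomputable def w : F5 := (1 + sqrt5) / 2

theorem w_sub_three_neg : ((w : F5) : ℝ) - 3 < 0 := by
  have h : ((w : F5) : ℝ) = (1 + Real.sqrt 5) / 2 := rfl
  have h5 : Real.sqrt 5 < 3 := by
    rw [Real.sqrt_lt' (by norm_num)]
    norm_num
  rw [h]
  linarith

/-- The reduced norm of `(-6, w - 3)` is anisotropic over `F5`, being positive definite at the
real place given by the inclusion. -/
theorem norm_ne_zero (x : ℍ[F5, -6, w - 3]) (hx : x ≠ 0) : (x * star x).re ≠ 0 := by
  intro h
  apply hx
  have h' : (x.re : ℝ) ^ 2 + 6 * (x.imI : ℝ) ^ 2 + (3 - (w : ℝ)) * (x.imJ : ℝ) ^ 2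
      + 6 * ((3 - (w : ℝ)) * (x.imK : ℝ) ^ 2) = 0 := by
    have h2 : x.re ^ 2 + 6 * x.imI ^ 2 + (3 - w) * x.imJ ^ 2
        + 6 * ((3 - w) * x.imK ^ 2) = 0 := by
      refine Eq.trans ?_ h
      simp
      ring
    exact congrArg (Subtype.val : F5 → ℝ) h2
  have hw : 0 < 3 - (w : ℝ) := by linarith [w_sub_three_neg]
  have h1 := sq_nonneg (x.re : ℝ)
  have h2 := sq_nonneg (x.imI : ℝ)
  have h3 := mul_nonneg hw.le (sq_nonneg (x.imJ : ℝ))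
  have h4 := mul_nonneg hw.le (sq_nonneg (x.imK : ℝ))
  have e1 : (x.re : ℝ) ^ 2 = 0 := by linarith
  have e2 : (x.imI : ℝ) ^ 2 = 0 := by linarith
  have e3 : (3 - (w : ℝ)) * (x.imJ : ℝ) ^ 2 = 0 := by linarith
  have e4 : (3 - (w : ℝ)) * (x.imK : ℝ) ^ 2 = 0 := by linarith
  ext
  · simpa using e1
  · simpa using e2
  · simpa [hw.ne'] using e3
  · simpa [hw.ne'] using e4

/-- The quaternion algebra `B = (-6, w-3)` over `F = ℚ(√5)`, with basis `1, X, Y, XY`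
subject to `X² = -6`, `Y² = w - 3 = √5·(1-√5)/2` and `XY = -YX`, is a division
algebra: every nonzero element of `B` is invertible. -/
theorem quaternion_algebra_neg6_wsub3_is_division :
    w - 3 = sqrt5 * (1 - sqrt5) / 2 ∧
    ∀ x : ℍ[F5, -6, w - 3], x ≠ 0 → IsUnit x := by
  refine ⟨?_, fun x hx => ?_⟩
  · have h5 : sqrt5 * sqrt5 = 5 :=
      Subtype.ext (Real.mul_self_sqrt (by norm_num : (0 : ℝ) ≤ 5))
    unfold w
    linear_combination (1 / 2 : F5) * h5
  · have hn := norm_ne_zero x hx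
    have hl : x * star x = ((x * star x).re : F5) := QuaternionAlgebra.mul_star_eq_coe x
    have hr : star x * x = ((x * star x).re : F5) := by
      rw [← hl]
      exact star_comm_self' x
    generalize (x * star x).re = n at hn hl hr
    refine ⟨⟨x, n⁻¹ • star x, ?_, ?_⟩, rfl⟩
    · rw [mul_smul_comm, hl, ← QuaternionAlgebra.coe_smul, smul_eq_mul, inv_mul_cancel₀ hn,
        QuaternionAlgebra.coe_one]
    · rw [smul_mul_assoc, hr, ← QuaternionAlgebra.coe_smul, smul_eq_mul, inv_mul_cancel₀ hn,
        QuaternionAlgebra.coe_one]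
end

section
/- Let S ⊂ ℂ⁴ be the set of the 120 singular points of the affine threefold f_5 = 0, and let V be the 126-dimensional ℂ-vector space of homogeneous polynomials of degree 5 in the variables x_0, x_1, x_2, x_3, x_4. Then the subspace { F ∈ V : F(1, a_1, a_2, a_3, a_4) = 0 for all (a_1,a_2,a_3,a_4) ∈ S } has dimension exactly 26. Consequently, the evaluation map V → ℂ^S has rank 100 and its cokernel has dimension 20 (the defect of the nodal quintic X̄ is 20). -/
/-!
The partial derivatives of `P_5` have 16 common zeros: 2 with critical value `6`, 4 with critical
value `-3` and 10 with critical value `-2` (`crit_cases`), all with coordinates in `ℤ[ζ]` for a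
primitive 15th root of unity `ζ` (`pt`). A singular point of `f_5 = 0` is a pair of critical points
with the same critical value (`mem_S_iff`), so there are `4 + 16 + 100 = 120` of them
(`nodeEquiv`).

Since `dim V = 126`, rank-nullity reduces the dimension count to the two bounds `dim ker ≥ 26` and
`rank ≥ 100`.

* Kernel. The forms `kerForm` vanish at all nodes (`kerForm_nodePt`): linear multiples of the four
  partial derivatives; linear multiples of the difference of the values, in the two pairs of
  variables, of a quartic `qf` which equals `-P_5` on critical points; and one form coming from a
  quartic `kf` which on critical points is a multiple of `x + y` by a constant depending only on
  the critical value. They are independent because their values at 26 points form a nonsingular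
  matrix (`linearIndependent_kerVec`).
* Range. On the 100 nodes with critical value `-2`, a product of two sets of ten points, the 84
  products of monomials of degree at most `3` with total degree at most `5` are independent, as the
  monomials of degree at most `3` are independent on the ten points. The sixteen forms `highForm`
  vanish at these nodes (`highForm_nodePt`) and are independent on sixteen of the other twenty.
  Together this gives 100 independent functions (`linearIndependent_rangeVec`).

The matrices involved have entries in `ℤ[ζ]`. An integer polynomial vanishing at `ζ` is divisible
by the 15th cyclotomic polynomial, hence vanishes at `9` modulo `31`, which has order 15. So each
matrix is nonsingular as soon as its reduction modulo `31` is (`det_ne_zero_of_mod`), and for the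
reduction an inverse is given.
-/

open MvPolynomial

/-- The set of singular points of the affine threefold `f_5 = 0` in `ℂ⁴`. -/
def S : Set (Fin 4 → ℂ) :=
  {p | eval p f5 = 0 ∧ ∀ i : Fin 4, eval p (pderiv i f5) = 0}

/-- The space of homogeneous polynomials of degree 5 in `x_0, x_1, x_2, x_3, x_4`. -/
noncomputable def V : Submodule ℂ (MvPolynomial (Fin 5) ℂ) :=
  homogeneousSubmodule (Fin 5) ℂ 5

/-- The evaluation map sending a quintic form `F` to the function
`S → ℂ`, `a ↦ F(1, a_1, a_2, a_3, a_4)`. -/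
noncomputable def evalMap : V →ₗ[ℂ] (S → ℂ) :=
  LinearMap.pi fun s : S =>
    (aeval (Fin.cons 1 (s : Fin 4 → ℂ))).toLinearMap.comp V.subtype

/-! ### Critical points of `P_5` -/

/-- The partial derivative `∂P_5/∂x_1`, divided by `5` and homogenized by `h`. By the symmetry
of `P_5`, the other partial derivative is `5 * dP h y x`. -/
def dP {R : Type*} [CommRing R] (h x y : R) : R :=
  x ^ 4 - 3 * h * x ^ 2 * y - h * y ^ 3 + 2 * h ^ 2 * x * y + h ^ 2 * y ^ 2 + 2 * h ^ 3 * x - h ^ 4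

/-- The two critical points of `P_5` with critical value `6`. -/
def CritA (x y : ℂ) : Prop := x = y ∧ x ^ 2 = x + 1

/-- The four critical points of `P_5` with critical value `-3`. -/
def CritB (x y : ℂ) : Prop := (x + y) ^ 2 + (x + y) = 1 ∧ x * y = 1 - (x + y)

/-- The ten critical points of `P_5` with critical value `-2`. -/
def CritC (x y : ℂ) : Prop :=
  (x = y ∧ x ^ 2 = 3 * x - 1) ∨ (x * y = 1 ∧ (x + y) ^ 2 = x + y + 1) ∨
    (x + y = -2 ∧ (x * y) ^ 2 = 7 * (x * y) - 11)

lemma CritA.dP_eq {x y : ℂ} (h : CritA x y) : dP 1 x y = 0 ∧ dP 1 y x = 0 := by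
  obtain ⟨rfl, h⟩ := h
  simp only [dP]
  constructor <;> grind

lemma CritB.dP_eq {x y : ℂ} (h : CritB x y) : dP 1 x y = 0 ∧ dP 1 y x = 0 := by
  obtain ⟨h, h'⟩ := h
  simp only [dP]
  constructor <;> grind

lemma CritC.dP_eq {x y : ℂ} (h : CritC x y) : dP 1 x y = 0 ∧ dP 1 y x = 0 := by
  simp only [dP]
  rcases h with ⟨rfl, h⟩ | ⟨h, h'⟩ | ⟨h, h'⟩
  · constructor <;> grind
  · constructor <;> grind
  · obtain rfl : y = -2 - x := by linear_combination h
    constructor <;> grind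

lemma CritA.P5_eq {x y : ℂ} (h : CritA x y) : P5 x y = 6 := by
  obtain ⟨rfl, h⟩ := h
  simp only [P5]
  grind

lemma CritB.P5_eq {x y : ℂ} (h : CritB x y) : P5 x y = -3 := by
  obtain ⟨h, h'⟩ := h
  simp only [P5]
  grind

lemma CritC.P5_eq {x y : ℂ} (h : CritC x y) : P5 x y = -2 := by
  simp only [P5]
  rcases h with ⟨rfl, h⟩ | ⟨h, h'⟩ | ⟨h, h'⟩
  · grind
  · grind
  · obtain rfl : y = -2 - x := by linear_combination h
    grind

/-- The difference of the two derivatives is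
`(x - y) (s + 2) (s ^ 2 - s + 1 - 2 p)` with `s = x + y` and `p = x y`, which makes the
critical equations solvable by quadratic equations in `s` and `p`. -/
lemma crit_cases_s17 {x y : ℂ} (h1 : dP 1 x y = 0) (h2 : dP 1 y x = 0) :
    CritA x y ∨ CritB x y ∨ CritC x y := by
  simp only [dP] at h1 h2
  have hd : (x - y) * ((x + y + 2) * ((x + y) ^ 2 - (x + y) + 1 - 2 * (x * y))) = 0 := by
    linear_combination h1 - h2
  rcases mul_eq_zero.1 hd with h | h
  · obtain rfl : x = y := sub_eq_zero.1 h
    have : (x ^ 2 - x - 1) * (x ^ 2 - 3 * x + 1) = 0 := by linear_combination h1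
    rcases mul_eq_zero.1 this with h | h
    · exact Or.inl ⟨rfl, by linear_combination h⟩
    · exact Or.inr (Or.inr (Or.inl ⟨rfl, by linear_combination h⟩))
  rcases mul_eq_zero.1 h with h | h
  · refine Or.inr (Or.inr (Or.inr (Or.inr ⟨by linear_combination h, ?_⟩)))
    obtain rfl : y = -2 - x := by linear_combination h
    linear_combination (h1 + h2) / 2
  · have hs : ((x + y) ^ 2 - (x + y) - 1) * ((x + y) ^ 2 + (x + y) - 1) = 0 := by
      grind
    rcases mul_eq_zero.1 hs with hs | hs
    · refine Or.inr (Or.inr (Or.inr (Or.inl ⟨?_, ?_⟩)))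
      · linear_combination (hs - h) / 2
      · linear_combination hs
    · refine Or.inr (Or.inl ⟨?_, ?_⟩)
      · linear_combination hs
      · linear_combination (hs - h) / 2

lemma mem_S_iff (p : Fin 4 → ℂ) : p ∈ S ↔
    P5 (p 0) (p 1) = P5 (p 2) (p 3) ∧ (dP 1 (p 0) (p 1) = 0 ∧ dP 1 (p 1) (p 0) = 0) ∧
      (dP 1 (p 2) (p 3) = 0 ∧ dP 1 (p 3) (p 2) = 0) := by
  have e : eval p f5 = P5 (p 0) (p 1) - P5 (p 2) (p 3) := by simp [f5, P5]
  have h5 : ∀ i, pderiv i (5 : MvPolynomial (Fin 4) ℂ) = 0 := fun i => by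
    rw [← map_ofNat C 5, pderiv_C]
  have d0 : eval p (pderiv 0 f5) = 5 * dP 1 (p 0) (p 1) := by
    simp [f5, P5, dP, pderiv_X, Derivation.leibniz_pow, h5]; ring
  have d1 : eval p (pderiv 1 f5) = 5 * dP 1 (p 1) (p 0) := by
    simp [f5, P5, dP, pderiv_X, Derivation.leibniz_pow, h5]; ring
  have d2 : eval p (pderiv 2 f5) = -5 * dP 1 (p 2) (p 3) := by
    simp [f5, P5, dP, pderiv_X, Derivation.leibniz_pow, h5]; ring
  have d3 : eval p (pderiv 3 f5) = -5 * dP 1 (p 3) (p 2) := by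
    simp [f5, P5, dP, pderiv_X, Derivation.leibniz_pow, h5]; ring
  simp [S, Fin.forall_fin_succ, e, d0, d1, d2, d3, sub_eq_zero]
  tauto

/-! ### The critical points in terms of roots of unity -/

/-- The 16 critical points of `P_5`, for `e` a primitive fifth and `w` a primitive third root of
unity: indices `0, 1` have critical value `6`, indices `2, …, 5` have critical value `-3`, and
indices `6, …, 15` have critical value `-2`. -/
def pt {R : Type*} [CommRing R] (e w : R) : Fin 16 → R × R :=
  ![(1 + e + e ^ 4, 1 + e + e ^ 4), (1 + e ^ 2 + e ^ 3, 1 + e ^ 2 + e ^ 3),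
    (w * (1 + e + e ^ 4), w ^ 2 * (1 + e + e ^ 4)),
    (w ^ 2 * (1 + e + e ^ 4), w * (1 + e + e ^ 4)),
    (w * (1 + e ^ 2 + e ^ 3), w ^ 2 * (1 + e ^ 2 + e ^ 3)),
    (w ^ 2 * (1 + e ^ 2 + e ^ 3), w * (1 + e ^ 2 + e ^ 3)),
    (1 - e - e ^ 4, 1 - e - e ^ 4), (1 - e ^ 2 - e ^ 3, 1 - e ^ 2 - e ^ 3),
    (-e, -e ^ 4), (-e ^ 4, -e), (-e ^ 2, -e ^ 3), (-e ^ 3, -e ^ 2),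
    (e - 1 - e ^ 4, e ^ 4 - 1 - e), (e ^ 4 - 1 - e, e - 1 - e ^ 4),
    (e ^ 2 - 1 - e ^ 3, e ^ 3 - 1 - e ^ 2), (e ^ 3 - 1 - e ^ 2, e ^ 2 - 1 - e ^ 3)]

/-- The index of the critical value of the critical point `pt e w i`. -/
def cls (i : Fin 16) : Fin 3 := if i < 2 then 0 else if i < 6 then 1 else 2

lemma map_pt {R R' : Type*} [CommRing R] [CommRing R'] (φ : R →+* R') (e w : R) (i : Fin 16) :
    pt (φ e) (φ w) i = (φ (pt e w i).1, φ (pt e w i).2) := by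
  fin_cases i <;> simp [pt]

lemma pt_class {e w : ℂ} (he : 1 + e + e ^ 2 + e ^ 3 + e ^ 4 = 0) (hw : 1 + w + w ^ 2 = 0)
    (i : Fin 16) :
    (cls i = 0 ∧ CritA (pt e w i).1 (pt e w i).2) ∨
    (cls i = 1 ∧ CritB (pt e w i).1 (pt e w i).2) ∨
    (cls i = 2 ∧ CritC (pt e w i).1 (pt e w i).2) := by
  have he5 : e ^ 5 = 1 := by linear_combination (e - 1) * he
  have hA : ∀ x : ℂ, x ^ 2 = x + 1 → CritA x x := fun x h => ⟨rfl, h⟩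
  have hB : ∀ x : ℂ, x ^ 2 = x + 1 → CritB (w * x) (w ^ 2 * x) := fun x h =>
    ⟨by grind, by grind⟩
  have hB' : ∀ x : ℂ, x ^ 2 = x + 1 → CritB (w ^ 2 * x) (w * x) := fun x h =>
    ⟨by grind, by grind⟩
  have h1 : (1 + e + e ^ 4) ^ 2 = (1 + e + e ^ 4) + 1 := by grind
  have h2 : (1 + e ^ 2 + e ^ 3) ^ 2 = (1 + e ^ 2 + e ^ 3) + 1 := by grind
  fin_cases i
  · exact Or.inl ⟨rfl, hA _ h1⟩
  · exact Or.inl ⟨rfl, hA _ h2⟩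
  · exact Or.inr (Or.inl ⟨rfl, hB _ h1⟩)
  · exact Or.inr (Or.inl ⟨rfl, hB' _ h1⟩)
  · exact Or.inr (Or.inl ⟨rfl, hB _ h2⟩)
  · exact Or.inr (Or.inl ⟨rfl, hB' _ h2⟩)
  · exact Or.inr (Or.inr ⟨rfl, Or.inl ⟨rfl, by simp [pt]; grind⟩⟩)
  · exact Or.inr (Or.inr ⟨rfl, Or.inl ⟨rfl, by simp [pt]; grind⟩⟩)
  · exact Or.inr (Or.inr ⟨rfl, Or.inr (Or.inl ⟨by simp [pt]; grind, by simp [pt]; grind⟩)⟩)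
  · exact Or.inr (Or.inr ⟨rfl, Or.inr (Or.inl ⟨by simp [pt]; grind, by simp [pt]; grind⟩)⟩)
  · exact Or.inr (Or.inr ⟨rfl, Or.inr (Or.inl ⟨by simp [pt]; grind, by simp [pt]; grind⟩)⟩)
  · exact Or.inr (Or.inr ⟨rfl, Or.inr (Or.inl ⟨by simp [pt]; grind, by simp [pt]; grind⟩)⟩)
  · exact Or.inr (Or.inr ⟨rfl, Or.inr (Or.inr ⟨by simp [pt]; grind, by simp [pt]; grind⟩)⟩)
  · exact Or.inr (Or.inr ⟨rfl, Or.inr (Or.inr ⟨by simp [pt]; grind, by simp [pt]; grind⟩)⟩)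
  · exact Or.inr (Or.inr ⟨rfl, Or.inr (Or.inr ⟨by simp [pt]; grind, by simp [pt]; grind⟩)⟩)
  · exact Or.inr (Or.inr ⟨rfl, Or.inr (Or.inr ⟨by simp [pt]; grind, by simp [pt]; grind⟩)⟩)

lemma exists_pt_A {e w x y : ℂ} (he : 1 + e + e ^ 2 + e ^ 3 + e ^ 4 = 0) (h : CritA x y) :
    ∃ i, cls i = 0 ∧ pt e w i = (x, y) := by
  obtain ⟨rfl, h⟩ := h
  have : (x - (1 + e + e ^ 4)) * (x - (1 + e ^ 2 + e ^ 3)) = 0 := by grind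
  rcases mul_eq_zero.1 this with h | h
  · exact ⟨0, rfl, by simp [pt, sub_eq_zero.1 h]⟩
  · exact ⟨1, rfl, by simp [pt, sub_eq_zero.1 h]⟩

lemma exists_pt_B {e w x y : ℂ} (he : 1 + e + e ^ 2 + e ^ 3 + e ^ 4 = 0)
    (hw : 1 + w + w ^ 2 = 0) (h : CritB x y) : ∃ i, cls i = 1 ∧ pt e w i = (x, y) := by
  obtain ⟨h, hp⟩ := h
  -- `x` and `y` are the roots of `t ^ 2 + a t + a ^ 2` for `a = -(x + y)` a root of `t ^ 2 - t - 1`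
  have hxy : ∀ a : ℂ, x + y + a = 0 →
      (x = w * a ∧ y = w ^ 2 * a) ∨ (x = w ^ 2 * a ∧ y = w * a) := by
    intro a ha
    have : (x - w * a) * (x - w ^ 2 * a) = 0 := by grind
    rcases mul_eq_zero.1 this with h | h
    · exact Or.inl ⟨by linear_combination h, by linear_combination ha - h - a * hw⟩
    · exact Or.inr ⟨by linear_combination h, by linear_combination ha - h - a * hw⟩
  have hs : (x + y + (1 + e + e ^ 4)) * (x + y + (1 + e ^ 2 + e ^ 3)) = 0 := by grind
  rcases mul_eq_zero.1 hs with hs | hs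
  · rcases hxy _ hs with ⟨rfl, rfl⟩ | ⟨rfl, rfl⟩
    exacts [⟨2, rfl, rfl⟩, ⟨3, rfl, rfl⟩]
  · rcases hxy _ hs with ⟨rfl, rfl⟩ | ⟨rfl, rfl⟩
    exacts [⟨4, rfl, rfl⟩, ⟨5, rfl, rfl⟩]

lemma exists_pt_C {e w x y : ℂ} (he : 1 + e + e ^ 2 + e ^ 3 + e ^ 4 = 0) (h : CritC x y) :
    ∃ i, cls i = 2 ∧ pt e w i = (x, y) := by
  have he5 : e ^ 5 = 1 := by linear_combination (e - 1) * he
  rcases h with ⟨rfl, h⟩ | ⟨h, h'⟩ | ⟨h, h'⟩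
  · have : (x - (1 - e - e ^ 4)) * (x - (1 - e ^ 2 - e ^ 3)) = 0 := by grind
    rcases mul_eq_zero.1 this with h | h
    · exact ⟨6, rfl, by simp [pt, sub_eq_zero.1 h]⟩
    · exact ⟨7, rfl, by simp [pt, sub_eq_zero.1 h]⟩
  · have hs : (x + y + e + e ^ 4) * (x + y + e ^ 2 + e ^ 3) = 0 := by grind
    rcases mul_eq_zero.1 hs with hs | hs
    · have : (x + e) * (x + e ^ 4) = 0 := by grind
      rcases mul_eq_zero.1 this with h | h
      · exact ⟨8, rfl, Prod.ext (by change -e = x; grind) (by change -e ^ 4 = y; grind)⟩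
      · exact ⟨9, rfl, Prod.ext (by change -e ^ 4 = x; grind) (by change -e = y; grind)⟩
    · have : (x + e ^ 2) * (x + e ^ 3) = 0 := by grind
      rcases mul_eq_zero.1 this with h | h
      · exact ⟨10, rfl, Prod.ext (by change -e ^ 2 = x; grind) (by change -e ^ 3 = y; grind)⟩
      · exact ⟨11, rfl, Prod.ext (by change -e ^ 3 = x; grind) (by change -e ^ 2 = y; grind)⟩
  · have hp : (x * y - (3 - e ^ 2 - e ^ 3)) * (x * y - (3 - e - e ^ 4)) = 0 := by grind
    rcases mul_eq_zero.1 hp with hp | hp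
    · have : (x - (e - 1 - e ^ 4)) * (x - (e ^ 4 - 1 - e)) = 0 := by grind
      rcases mul_eq_zero.1 this with h | h
      · exact ⟨12, rfl, Prod.ext (by change e - 1 - e ^ 4 = x; grind)
          (by change e ^ 4 - 1 - e = y; grind)⟩
      · exact ⟨13, rfl, Prod.ext (by change e ^ 4 - 1 - e = x; grind)
          (by change e - 1 - e ^ 4 = y; grind)⟩
    · have : (x - (e ^ 2 - 1 - e ^ 3)) * (x - (e ^ 3 - 1 - e ^ 2)) = 0 := by grind
      rcases mul_eq_zero.1 this with h | h
      · exact ⟨14, rfl, Prod.ext (by change e ^ 2 - 1 - e ^ 3 = x; grind)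
          (by change e ^ 3 - 1 - e ^ 2 = y; grind)⟩
      · exact ⟨15, rfl, Prod.ext (by change e ^ 3 - 1 - e ^ 2 = x; grind)
          (by change e ^ 2 - 1 - e ^ 3 = y; grind)⟩

/-! ### Reduction modulo 31 -/

lemma isPrimitiveRoot_nine : IsPrimitiveRoot (9 : ZMod 31) 15 := by
  rw [IsPrimitiveRoot.iff (by norm_num)]
  exact ⟨by decide, fun l h0 hl => by interval_cases l <;> decide⟩

/-- An integer polynomial vanishing at a primitive 15th root of unity vanishes at `9` modulo `31`,
as `9` is a primitive 15th root of unity there. -/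
lemma eval_nine_eq_zero {ζ : ℂ} (hζ : IsPrimitiveRoot ζ 15) {D : Polynomial ℤ}
    (hD : Polynomial.aeval ζ D = 0) :
    Polynomial.eval₂RingHom (Int.castRingHom (ZMod 31)) 9 D = 0 := by
  have hdvd : Polynomial.cyclotomic 15 ℤ ∣ D := by
    rw [Polynomial.cyclotomic_eq_minpoly hζ (by norm_num)]
    exact minpoly.isIntegrallyClosed_dvd (hζ.isIntegral (by norm_num)) hD
  obtain ⟨q, rfl⟩ := hdvd
  have : Fact (Nat.Prime 31) := ⟨by norm_num⟩
  have := isPrimitiveRoot_nine.isRoot_cyclotomic (by norm_num)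
  rw [Polynomial.IsRoot, ← Polynomial.map_cyclotomic_int, Polynomial.eval_map] at this
  rw [map_mul, Polynomial.coe_eval₂RingHom, this, zero_mul]

/-- A matrix of integer polynomials which is invertible at `9` modulo `31` is nonsingular at a
primitive 15th root of unity. -/
lemma det_ne_zero_of_mod {n : Type*} [Fintype n] [DecidableEq n] {ζ : ℂ}
    (hζ : IsPrimitiveRoot ζ 15) (M : Matrix n n (Polynomial ℤ)) (N : Matrix n n (ZMod 31))
    (h : M.map (Polynomial.eval₂RingHom (Int.castRingHom (ZMod 31)) 9) * N = 1) :
    (M.map (Polynomial.aeval ζ : Polynomial ℤ →ₐ[ℤ] ℂ).toRingHom).det ≠ 0 := by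
  intro h0
  have h1 := congrArg Matrix.det h
  rw [Matrix.det_mul, Matrix.det_one, ← RingHom.mapMatrix_apply, ← RingHom.map_det,
    eval_nine_eq_zero hζ (by rwa [← RingHom.mapMatrix_apply, ← RingHom.map_det] at h0),
    zero_mul] at h1
  exact absurd h1 (by decide)

lemma sum_pow_five {ζ : ℂ} (hζ : IsPrimitiveRoot ζ 15) :
    1 + ζ ^ 3 + (ζ ^ 3) ^ 2 + (ζ ^ 3) ^ 3 + (ζ ^ 3) ^ 4 = 0 := by
  have h := (hζ.pow (by norm_num) (show 15 = 3 * 5 by norm_num)).geom_sum_eq_zero (by norm_num)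
  simpa [Finset.sum_range_succ] using h

lemma sum_pow_three {ζ : ℂ} (hζ : IsPrimitiveRoot ζ 15) : 1 + ζ ^ 5 + (ζ ^ 5) ^ 2 = 0 := by
  have h := (hζ.pow (by norm_num) (show 15 = 5 * 3 by norm_num)).geom_sum_eq_zero (by norm_num)
  simpa [Finset.sum_range_succ] using h

lemma pt_injective {ζ : ℂ} (hζ : IsPrimitiveRoot ζ 15) :
    Function.Injective (pt (ζ ^ 3) (ζ ^ 5)) := by
  intro i j hij
  let φ := (Polynomial.aeval ζ : Polynomial ℤ →ₐ[ℤ] ℂ).toRingHom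
  let ψ := Polynomial.eval₂RingHom (Int.castRingHom (ZMod 31)) 9
  have hX : φ Polynomial.X = ζ := Polynomial.aeval_X ζ
  have hY : ψ Polynomial.X = 9 := Polynomial.eval₂_X _ _
  have key : pt ((9 : ZMod 31) ^ 3) (9 ^ 5) i = pt ((9 : ZMod 31) ^ 3) (9 ^ 5) j := by
    rw [← hX, ← map_pow, ← map_pow, map_pt φ, map_pt φ, Prod.mk.injEq, ← sub_eq_zero,
      ← map_sub, ← sub_eq_zero (a := φ (pt _ _ i).2), ← map_sub] at hij
    have h1 := eval_nine_eq_zero hζ hij.1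
    have h2 := eval_nine_eq_zero hζ hij.2
    rw [map_sub, sub_eq_zero] at h1 h2
    rw [← hY, ← map_pow, ← map_pow, map_pt ψ, map_pt ψ, Prod.mk.injEq]
    exact ⟨h1, h2⟩
  have inj : ∀ i j,
      pt ((9 : ZMod 31) ^ 3) (9 ^ 5) i = pt ((9 : ZMod 31) ^ 3) (9 ^ 5) j → i = j := by
    decide +kernel
  exact inj i j key

/-! ### The 120 nodes -/

/-- Pairs of critical points with equal critical value. -/
abbrev NodeIdx : Type := {p : Fin 16 × Fin 16 // cls p.1 = cls p.2}

/-- The point of `ℂ⁴` given by a pair of critical points. -/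
def nodeVec (e w : ℂ) (p : Fin 16 × Fin 16) : Fin 4 → ℂ :=
  ![(pt e w p.1).1, (pt e w p.1).2, (pt e w p.2).1, (pt e w p.2).2]

lemma pt_crit {e w : ℂ} (he : 1 + e + e ^ 2 + e ^ 3 + e ^ 4 = 0) (hw : 1 + w + w ^ 2 = 0)
    (i : Fin 16) : dP 1 (pt e w i).1 (pt e w i).2 = 0 ∧ dP 1 (pt e w i).2 (pt e w i).1 = 0 := by
  rcases pt_class he hw i with h | h | h <;> exact h.2.dP_eq

lemma P5_pt {e w : ℂ} (he : 1 + e + e ^ 2 + e ^ 3 + e ^ 4 = 0) (hw : 1 + w + w ^ 2 = 0)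
    (i : Fin 16) : P5 (pt e w i).1 (pt e w i).2 = ![6, -3, -2] (cls i) := by
  rcases pt_class he hw i with h | h | h <;> rw [h.1, h.2.P5_eq] <;> rfl

lemma nodeVec_mem {e w : ℂ} (he : 1 + e + e ^ 2 + e ^ 3 + e ^ 4 = 0) (hw : 1 + w + w ^ 2 = 0)
    (p : NodeIdx) : nodeVec e w p.1 ∈ S := by
  rw [mem_S_iff]
  refine ⟨?_, pt_crit he hw p.1.1, pt_crit he hw p.1.2⟩
  have h1 := P5_pt he hw p.1.1
  rw [p.2, ← P5_pt he hw p.1.2] at h1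
  exact h1

lemma exists_pt {e w x y : ℂ} (he : 1 + e + e ^ 2 + e ^ 3 + e ^ 4 = 0) (hw : 1 + w + w ^ 2 = 0)
    (h : dP 1 x y = 0 ∧ dP 1 y x = 0) : ∃ i, pt e w i = (x, y) := by
  rcases crit_cases_s17 h.1 h.2 with h | h | h
  · obtain ⟨i, -, hi⟩ := exists_pt_A (w := w) he h
    exact ⟨i, hi⟩
  · obtain ⟨i, -, hi⟩ := exists_pt_B he hw h
    exact ⟨i, hi⟩
  · obtain ⟨i, -, hi⟩ := exists_pt_C (w := w) he h
    exact ⟨i, hi⟩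

lemma exists_nodeVec {e w : ℂ} (he : 1 + e + e ^ 2 + e ^ 3 + e ^ 4 = 0)
    (hw : 1 + w + w ^ 2 = 0) {v : Fin 4 → ℂ} (hv : v ∈ S) :
    ∃ p : NodeIdx, nodeVec e w p.1 = v := by
  rw [mem_S_iff] at hv
  obtain ⟨hP, h1, h2⟩ := hv
  obtain ⟨i, hi⟩ := exists_pt he hw h1
  obtain ⟨j, hj⟩ := exists_pt he hw h2
  refine ⟨⟨(i, j), ?_⟩, ?_⟩
  · have h1 := P5_pt he hw i
    have h2 := P5_pt he hw j
    rw [hi] at h1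
    rw [hj] at h2
    simp only at h1 h2
    rw [h1, h2] at hP
    change cls i = cls j
    generalize cls i = a at hP
    generalize cls j = b at hP
    fin_cases a <;> fin_cases b <;> first | rfl | (exfalso; norm_num at hP)
  · funext l
    fin_cases l <;> simp [nodeVec, hi, hj]

/-- The nodes are indexed by the pairs of critical points with equal critical value. -/
noncomputable def nodeEquiv {ζ : ℂ} (hζ : IsPrimitiveRoot ζ 15) : NodeIdx ≃ S :=
  Equiv.ofBijective
    (fun p => ⟨nodeVec (ζ ^ 3) (ζ ^ 5) p.1, nodeVec_mem (sum_pow_five hζ) (sum_pow_three hζ) p⟩) <| by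
    constructor
    · intro p q h
      have h' := congrArg Subtype.val h
      have h0 := congrFun h' 0
      have h1 := congrFun h' 1
      have h2 := congrFun h' 2
      have h3 := congrFun h' 3
      exact Subtype.ext (Prod.ext (pt_injective hζ (Prod.ext h0 h1))
        (pt_injective hζ (Prod.ext h2 h3)))
    · rintro ⟨v, hv⟩
      obtain ⟨p, hp⟩ := exists_nodeVec (sum_pow_five hζ) (sum_pow_three hζ) hv
      exact ⟨p, Subtype.ext hp⟩

lemma ncard_S {ζ : ℂ} (hζ : IsPrimitiveRoot ζ 15) : S.ncard = 120 := by
  rw [← Nat.card_coe_set_eq, ← Nat.card_congr (nodeEquiv hζ), Nat.card_eq_fintype_card]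
  decide +kernel

lemma finrank_V : Module.finrank ℂ V = 126 := by
  have hset : {d : Fin 5 →₀ ℕ | d.degree = 5} =
      ((Finset.finsuppAntidiag Finset.univ 5 : Finset (Fin 5 →₀ ℕ)) : Set (Fin 5 →₀ ℕ)) := by
    ext d
    simp [Finset.mem_finsuppAntidiag, Finsupp.degree_eq_sum]
  have hV : V = restrictSupport ℂ
      ((Finset.finsuppAntidiag Finset.univ 5 : Finset (Fin 5 →₀ ℕ)) : Set (Fin 5 →₀ ℕ)) := by
    rw [← hset]
    exact homogeneousSubmodule_eq_finsupp_supported _ _ _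
  rw [hV, Module.finrank_eq_card_basis (basisRestrictSupport ℂ _), ← Nat.card_eq_fintype_card,
    Nat.card_coe_set_eq, Set.ncard_coe_finset, Finset.card_finsuppAntidiag_nat_eq_choose]
  rfl

/-! ### Quintic forms -/

/-- A quartic form which, on the critical points of `P_5` in the chart `h = 1`, equals `-P_5`:
the form `xy(x²+y²) - ⋯` is what Euler's formula leaves of `-P_5` there. -/
def qf {R : Type*} [CommRing R] (h x y : R) : R :=
  x * y * (x ^ 2 + y ^ 2) - 2 * h * x * y * (x + y) - 3 * h ^ 2 * (x ^ 2 + y ^ 2)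
    + 4 * h ^ 3 * (x + y)

/-- A quartic form which, on the critical points of `P_5` in the chart `h = 1`, is a multiple of
`x + y`, the factor depending only on the critical value. -/
def kf {R : Type*} [CommRing R] (h x y : R) : R :=
  x ^ 2 * y ^ 2 - h * (x ^ 3 + y ^ 3) - h ^ 2 * x * y + h ^ 4

/-- A quartic form vanishing, in the chart `h = 1`, at the critical points of `P_5` with critical
value `-2`. -/
def gf {R : Type*} [CommRing R] (h x y : R) : R :=
  (x - y) * (x + y + 2 * h) * (x * y - h ^ 2)

/-- The 26 quintic forms through the nodes: linear multiples of the partial derivatives, linear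
multiples of `qf (x_1, x_2) - qf (x_3, x_4)`, and one more form built from `kf`. -/
def kerForm {R : Type*} [CommRing R] (v : Fin 5 → R) : Fin 26 → R :=
  ![dP (v 0) (v 1) (v 2) * v 0, dP (v 0) (v 1) (v 2) * v 1, dP (v 0) (v 1) (v 2) * v 2,
    dP (v 0) (v 1) (v 2) * v 3, dP (v 0) (v 1) (v 2) * v 4,
    dP (v 0) (v 2) (v 1) * v 0, dP (v 0) (v 2) (v 1) * v 1, dP (v 0) (v 2) (v 1) * v 2,
    dP (v 0) (v 2) (v 1) * v 3, dP (v 0) (v 2) (v 1) * v 4,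
    dP (v 0) (v 3) (v 4) * v 0, dP (v 0) (v 3) (v 4) * v 1, dP (v 0) (v 3) (v 4) * v 2,
    dP (v 0) (v 3) (v 4) * v 3, dP (v 0) (v 3) (v 4) * v 4,
    dP (v 0) (v 4) (v 3) * v 0, dP (v 0) (v 4) (v 3) * v 1, dP (v 0) (v 4) (v 3) * v 2,
    dP (v 0) (v 4) (v 3) * v 3, dP (v 0) (v 4) (v 3) * v 4,
    (qf (v 0) (v 1) (v 2) - qf (v 0) (v 3) (v 4)) * v 0,
    (qf (v 0) (v 1) (v 2) - qf (v 0) (v 3) (v 4)) * v 1,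
    (qf (v 0) (v 1) (v 2) - qf (v 0) (v 3) (v 4)) * v 2,
    (qf (v 0) (v 1) (v 2) - qf (v 0) (v 3) (v 4)) * v 3,
    (qf (v 0) (v 1) (v 2) - qf (v 0) (v 3) (v 4)) * v 4,
    kf (v 0) (v 3) (v 4) * (v 1 + v 2) - kf (v 0) (v 1) (v 2) * (v 3 + v 4)]

/-- The exponents of the ten monomials of degree at most `3` in two variables. -/
def ex : Fin 10 → ℕ × ℕ :=
  ![(0, 0), (1, 0), (0, 1), (2, 0), (1, 1), (0, 2), (3, 0), (2, 1), (1, 2), (0, 3)]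

/-- The 84 pairs of monomials of degree at most `3` with total degree at most `5`. -/
abbrev LowIdx : Type :=
  {p : Fin 10 × Fin 10 // (ex p.1).1 + (ex p.1).2 + (ex p.2).1 + (ex p.2).2 ≤ 5}

/-- The homogenization to degree `5` of the product of two monomials of degree at most `3`, one in
each pair of variables. -/
def lowForm {R : Type*} [CommRing R] (v : Fin 5 → R) (p : Fin 10 × Fin 10) : R :=
  v 0 ^ (5 - ((ex p.1).1 + (ex p.1).2 + (ex p.2).1 + (ex p.2).2)) *
    v 1 ^ (ex p.1).1 * v 2 ^ (ex p.1).2 * v 3 ^ (ex p.2).1 * v 4 ^ (ex p.2).2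

/-- Sixteen quintic forms vanishing at the 100 nodes with critical value `-2`: linear multiples of
the quartics `qf - 2 h⁴`, `kf - h³ (x + y)` and `gf` in one of the pairs of variables. -/
def highForm {R : Type*} [CommRing R] (v : Fin 5 → R) : Fin 16 → R :=
  ![(qf (v 0) (v 1) (v 2) - 2 * v 0 ^ 4) * v 0,
    (kf (v 0) (v 1) (v 2) - v 0 ^ 3 * (v 1 + v 2)) * v 0,
    (kf (v 0) (v 1) (v 2) - v 0 ^ 3 * (v 1 + v 2)) * v 1,
    (kf (v 0) (v 1) (v 2) - v 0 ^ 3 * (v 1 + v 2)) * v 2,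
    (kf (v 0) (v 1) (v 2) - v 0 ^ 3 * (v 1 + v 2)) * v 3,
    (kf (v 0) (v 1) (v 2) - v 0 ^ 3 * (v 1 + v 2)) * v 4,
    gf (v 0) (v 1) (v 2) * v 0, gf (v 0) (v 1) (v 2) * v 3, gf (v 0) (v 1) (v 2) * v 4,
    (kf (v 0) (v 3) (v 4) - v 0 ^ 3 * (v 3 + v 4)) * v 0,
    (kf (v 0) (v 3) (v 4) - v 0 ^ 3 * (v 3 + v 4)) * v 2,
    (kf (v 0) (v 3) (v 4) - v 0 ^ 3 * (v 3 + v 4)) * v 3,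
    (kf (v 0) (v 3) (v 4) - v 0 ^ 3 * (v 3 + v 4)) * v 4,
    gf (v 0) (v 3) (v 4) * v 0, gf (v 0) (v 3) (v 4) * v 1, gf (v 0) (v 3) (v 4) * v 2]

lemma map_kerForm {R R' : Type*} [CommRing R] [CommRing R'] (φ : R →+* R') (v : Fin 5 → R)
    (i : Fin 26) : φ (kerForm v i) = kerForm (fun l => φ (v l)) i := by
  have h2 : φ 2 = 2 := map_ofNat φ 2
  have h3 : φ 3 = 3 := map_ofNat φ 3
  have h4 : φ 4 = 4 := map_ofNat φ 4
  fin_cases i <;> simp [kerForm, dP, qf, kf, h2, h3, h4]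

lemma map_lowForm {R R' : Type*} [CommRing R] [CommRing R'] (φ : R →+* R') (v : Fin 5 → R)
    (p : Fin 10 × Fin 10) : φ (lowForm v p) = lowForm (fun l => φ (v l)) p := by
  simp [lowForm]

lemma map_highForm {R R' : Type*} [CommRing R] [CommRing R'] (φ : R →+* R') (v : Fin 5 → R)
    (i : Fin 16) : φ (highForm v i) = highForm (fun l => φ (v l)) i := by
  have h2 : φ 2 = 2 := map_ofNat φ 2
  have h3 : φ 3 = 3 := map_ofNat φ 3
  have h4 : φ 4 = 4 := map_ofNat φ 4
  fin_cases i <;> simp [highForm, qf, kf, gf, h2, h3, h4]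

lemma isHomogeneous_ofNat (n : ℕ) [n.AtLeastTwo] :
    (OfNat.ofNat n : MvPolynomial (Fin 5) ℂ).IsHomogeneous 0 := by
  rw [← map_ofNat C n]
  exact isHomogeneous_C _ _

lemma isHomogeneous_dP (i j : Fin 5) :
    (dP (X 0) (X i) (X j) : MvPolynomial (Fin 5) ℂ).IsHomogeneous 4 := by
  have hX : ∀ l : Fin 5, (X l : MvPolynomial (Fin 5) ℂ).IsHomogeneous 1 := isHomogeneous_X ℂ
  have h2 := isHomogeneous_ofNat 2
  have h3 := isHomogeneous_ofNat 3
  exact (((((((hX i).pow 4).sub (((h3.mul (hX 0)).mul ((hX i).pow 2)).mul (hX j))).sub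
    ((hX 0).mul ((hX j).pow 3))).add (((h2.mul ((hX 0).pow 2)).mul (hX i)).mul (hX j))).add
    (((hX 0).pow 2).mul ((hX j).pow 2))).add ((h2.mul ((hX 0).pow 3)).mul (hX i))).sub
    ((hX 0).pow 4)

lemma isHomogeneous_qf (i j : Fin 5) :
    (qf (X 0) (X i) (X j) : MvPolynomial (Fin 5) ℂ).IsHomogeneous 4 := by
  have hX : ∀ l : Fin 5, (X l : MvPolynomial (Fin 5) ℂ).IsHomogeneous 1 := isHomogeneous_X ℂ
  have h2 := isHomogeneous_ofNat 2
  have h3 := isHomogeneous_ofNat 3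
  have h4 := isHomogeneous_ofNat 4
  exact (((((hX i).mul (hX j)).mul (((hX i).pow 2).add ((hX j).pow 2))).sub
    ((((h2.mul (hX 0)).mul (hX i)).mul (hX j)).mul ((hX i).add (hX j)))).sub
    ((h3.mul ((hX 0).pow 2)).mul (((hX i).pow 2).add ((hX j).pow 2)))).add
    ((h4.mul ((hX 0).pow 3)).mul ((hX i).add (hX j)))

lemma isHomogeneous_kf (i j : Fin 5) :
    (kf (X 0) (X i) (X j) : MvPolynomial (Fin 5) ℂ).IsHomogeneous 4 := by
  have hX : ∀ l : Fin 5, (X l : MvPolynomial (Fin 5) ℂ).IsHomogeneous 1 := isHomogeneous_X ℂ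
  exact (((((hX i).pow 2).mul ((hX j).pow 2)).sub
    ((hX 0).mul (((hX i).pow 3).add ((hX j).pow 3)))).sub
    ((((hX 0).pow 2).mul (hX i)).mul (hX j))).add ((hX 0).pow 4)

lemma isHomogeneous_gf (i j : Fin 5) :
    (gf (X 0) (X i) (X j) : MvPolynomial (Fin 5) ℂ).IsHomogeneous 4 := by
  have hX : ∀ l : Fin 5, (X l : MvPolynomial (Fin 5) ℂ).IsHomogeneous 1 := isHomogeneous_X ℂ
  have h2 := isHomogeneous_ofNat 2
  exact (((hX i).sub (hX j)).mul (((hX i).add (hX j)).add (h2.mul (hX 0)))).mul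
    (((hX i).mul (hX j)).sub ((hX 0).pow 2))

lemma kerForm_mem_V (i : Fin 26) : kerForm (X : Fin 5 → MvPolynomial (Fin 5) ℂ) i ∈ V := by
  have hX : ∀ l : Fin 5, (X l : MvPolynomial (Fin 5) ℂ).IsHomogeneous 1 := isHomogeneous_X ℂ
  have hd : ∀ i j l, (dP (X 0) (X i) (X j) * X l : MvPolynomial (Fin 5) ℂ).IsHomogeneous 5 :=
    fun i j l => (isHomogeneous_dP i j).mul (hX l)
  have hq : ∀ l, ((qf (X 0) (X 1) (X 2) - qf (X 0) (X 3) (X 4)) * X l :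
      MvPolynomial (Fin 5) ℂ).IsHomogeneous 5 :=
    fun l => ((isHomogeneous_qf 1 2).sub (isHomogeneous_qf 3 4)).mul (hX l)
  have hk := ((isHomogeneous_kf 3 4).mul ((hX 1).add (hX 2))).sub
    ((isHomogeneous_kf 1 2).mul ((hX 3).add (hX 4)))
  fin_cases i
  exacts [hd 1 2 0, hd 1 2 1, hd 1 2 2, hd 1 2 3, hd 1 2 4, hd 2 1 0, hd 2 1 1, hd 2 1 2,
    hd 2 1 3, hd 2 1 4, hd 3 4 0, hd 3 4 1, hd 3 4 2, hd 3 4 3, hd 3 4 4, hd 4 3 0, hd 4 3 1,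
    hd 4 3 2, hd 4 3 3, hd 4 3 4, hq 0, hq 1, hq 2, hq 3, hq 4, hk]

lemma lowForm_mem_V (p : LowIdx) : lowForm (X : Fin 5 → MvPolynomial (Fin 5) ℂ) p.1 ∈ V := by
  have hX : ∀ l : Fin 5, (X l : MvPolynomial (Fin 5) ℂ).IsHomogeneous 1 := isHomogeneous_X ℂ
  have hp := p.2
  have h := (((((hX 0).pow (5 - ((ex p.1.1).1 + (ex p.1.1).2 + (ex p.1.2).1 + (ex p.1.2).2))).mul
    ((hX 1).pow (ex p.1.1).1)).mul ((hX 2).pow (ex p.1.1).2)).mul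
    ((hX 3).pow (ex p.1.2).1)).mul ((hX 4).pow (ex p.1.2).2)
  change IsHomogeneous _ 5
  convert! h using 1
  omega

lemma highForm_mem_V (i : Fin 16) : highForm (X : Fin 5 → MvPolynomial (Fin 5) ℂ) i ∈ V := by
  have hX : ∀ l : Fin 5, (X l : MvPolynomial (Fin 5) ℂ).IsHomogeneous 1 := isHomogeneous_X ℂ
  have h2 := isHomogeneous_ofNat 2
  have hq := ((isHomogeneous_qf 1 2).sub (h2.mul ((hX 0).pow 4))).mul (hX 0)
  have hk : ∀ i j l, ((kf (X 0) (X i) (X j) - X 0 ^ 3 * (X i + X j)) * X l :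
      MvPolynomial (Fin 5) ℂ).IsHomogeneous 5 :=
    fun i j l => ((isHomogeneous_kf i j).sub (((hX 0).pow 3).mul ((hX i).add (hX j)))).mul (hX l)
  have hg : ∀ i j l, (gf (X 0) (X i) (X j) * X l : MvPolynomial (Fin 5) ℂ).IsHomogeneous 5 :=
    fun i j l => (isHomogeneous_gf i j).mul (hX l)
  fin_cases i
  exacts [hq, hk 1 2 0, hk 1 2 1, hk 1 2 2, hk 1 2 3, hk 1 2 4, hg 1 2 0, hg 1 2 3, hg 1 2 4,
    hk 3 4 0, hk 3 4 2, hk 3 4 3, hk 3 4 4, hg 3 4 0, hg 3 4 1, hg 3 4 2]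

/-! ### Values on the critical points -/

lemma CritA.qf_kf_eq {x y : ℂ} (h : CritA x y) :
    qf 1 x y = -6 ∧ kf 1 x y = -(x + y) := by
  obtain ⟨rfl, h⟩ := h
  simp only [qf, kf]
  constructor <;> grind

lemma CritB.qf_kf_eq {x y : ℂ} (h : CritB x y) :
    qf 1 x y = 3 ∧ kf 1 x y = 2 * (x + y) := by
  obtain ⟨h, h'⟩ := h
  simp only [qf, kf]
  constructor <;> grind

lemma CritC.qf_kf_gf_eq {x y : ℂ} (h : CritC x y) :
    qf 1 x y = 2 ∧ kf 1 x y = x + y ∧ gf 1 x y = 0 := by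
  simp only [qf, kf, gf]
  rcases h with ⟨rfl, h⟩ | ⟨h, h'⟩ | ⟨h, h'⟩
  · refine ⟨?_, ?_, ?_⟩ <;> grind
  · refine ⟨?_, ?_, ?_⟩ <;> grind
  · obtain rfl : y = -2 - x := by linear_combination h
    refine ⟨?_, ?_, ?_⟩ <;> grind

/-- A pair of critical points, as a point of the chart `x_0 = 1` of projective space. -/
def nodePt {R : Type*} [CommRing R] (e w : R) (p : Fin 16 × Fin 16) : Fin 5 → R :=
  ![1, (pt e w p.1).1, (pt e w p.1).2, (pt e w p.2).1, (pt e w p.2).2]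

lemma map_nodePt {R R' : Type*} [CommRing R] [CommRing R'] (φ : R →+* R') (e w : R)
    (p : Fin 16 × Fin 16) : (fun l => φ (nodePt e w p l)) = nodePt (φ e) (φ w) p := by
  funext l
  fin_cases l <;> simp [nodePt, map_pt]

lemma cons_nodeVec (e w : ℂ) (p : Fin 16 × Fin 16) :
    (Fin.cons 1 (nodeVec e w p) : Fin 5 → ℂ) = nodePt e w p := rfl

lemma kerForm_nodePt {e w : ℂ} (he : 1 + e + e ^ 2 + e ^ 3 + e ^ 4 = 0) (hw : 1 + w + w ^ 2 = 0)
    (p : NodeIdx) (i : Fin 26) : kerForm (nodePt e w p.1) i = 0 := by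
  obtain ⟨⟨a, b⟩, hab⟩ := p
  obtain ⟨d1, d2⟩ := pt_crit he hw a
  obtain ⟨d3, d4⟩ := pt_crit he hw b
  have hq : qf 1 (pt e w a).1 (pt e w a).2 = qf 1 (pt e w b).1 (pt e w b).2 ∧
      kf 1 (pt e w b).1 (pt e w b).2 * ((pt e w a).1 + (pt e w a).2) =
        kf 1 (pt e w a).1 (pt e w a).2 * ((pt e w b).1 + (pt e w b).2) := by
    change cls a = cls b at hab
    rcases pt_class he hw a with ⟨ha, h⟩ | ⟨ha, h⟩ | ⟨ha, h⟩ <;>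
    rcases pt_class he hw b with ⟨hb, h'⟩ | ⟨hb, h'⟩ | ⟨hb, h'⟩ <;>
    first
    | (exfalso; rw [ha, hb] at hab; revert hab; decide)
    | (rw [h.qf_kf_eq.1, h.qf_kf_eq.2, h'.qf_kf_eq.1, h'.qf_kf_eq.2]; exact ⟨rfl, by ring⟩)
    | (rw [h.qf_kf_gf_eq.1, h.qf_kf_gf_eq.2.1, h'.qf_kf_gf_eq.1, h'.qf_kf_gf_eq.2.1]
       exact ⟨rfl, by ring⟩)
  obtain ⟨hq, hk⟩ := hq
  fin_cases i <;> simp [kerForm, nodePt, d1, d2, d3, d4, hq, hk]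

lemma highForm_nodePt {e w : ℂ} (he : 1 + e + e ^ 2 + e ^ 3 + e ^ 4 = 0) (hw : 1 + w + w ^ 2 = 0)
    (a b : Fin 16) (ha : cls a = 2) (hb : cls b = 2) (i : Fin 16) :
    highForm (nodePt e w (a, b)) i = 0 := by
  have key : ∀ c, cls c = 2 → CritC (pt e w c).1 (pt e w c).2 := by
    intro c hc
    rcases pt_class he hw c with ⟨h, -⟩ | ⟨h, -⟩ | ⟨-, h⟩
    · exact absurd (hc.symm.trans h) (by decide)
    · exact absurd (hc.symm.trans h) (by decide)
    · exact h
  obtain ⟨q1, k1, g1⟩ := (key a ha).qf_kf_gf_eq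
  obtain ⟨q2, k2, g2⟩ := (key b hb).qf_kf_gf_eq
  fin_cases i <;> simp [highForm, nodePt, q1, k1, g1, k2, g2]

/-! ### Nonsingular evaluation matrices -/

/-- The values of the monomials of degree at most `3` at the ten critical points with critical
value `-2`. -/
def lowMat {R : Type*} [CommRing R] (e w : R) : Matrix (Fin 10) (Fin 10) R :=
  Matrix.of fun i j =>
    (pt e w (Fin.natAdd 6 j)).1 ^ (ex i).1 * (pt e w (Fin.natAdd 6 j)).2 ^ (ex i).2

/-- Sixteen of the twenty nodes with critical value different from `-2`. -/
def sel : Fin 16 → Fin 16 × Fin 16 :=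
  ![(0, 0), (0, 1), (1, 0), (1, 1), (2, 2), (2, 3), (2, 4), (2, 5),
    (3, 2), (3, 3), (3, 4), (3, 5), (4, 2), (4, 3), (4, 4), (4, 5)]

/-- The values of the forms `highForm` at the sixteen selected nodes. -/
def highMat {R : Type*} [CommRing R] (e w : R) : Matrix (Fin 16) (Fin 16) R :=
  Matrix.of fun i j => highForm (nodePt e w (sel j)) i

/-- Points of projective space at which the values of the forms `kerForm` make up a nonsingular
matrix. -/
def testPt {R : Type*} [CommRing R] : Fin 26 → Fin 5 → R :=
  ![![0, -1, 0, 0, 0],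
    ![0, 0, -1, 0, 0],
    ![0, 0, 0, -1, 0],
    ![0, 0, 0, 0, -1],
    ![1, 0, 0, 0, 0],
    ![0, -1, -1, 0, 0],
    ![0, -1, 0, -1, 0],
    ![0, -1, 0, 0, -1],
    ![0, -1, 0, 0, 1],
    ![0, -1, 0, 1, 0],
    ![0, -1, 1, 0, 0],
    ![0, 0, -1, -1, 0],
    ![0, 0, -1, 0, -1],
    ![0, 0, -1, 0, 1],
    ![0, 0, -1, 1, 0],
    ![0, 0, 0, -1, -1],
    ![0, 0, 0, -1, 1],
    ![1, -1, 0, 0, 0],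
    ![1, 0, -1, 0, 0],
    ![1, 0, 0, -1, 0],
    ![1, 0, 0, 0, -1],
    ![1, 0, 0, 0, 1],
    ![1, 0, 0, 1, 0],
    ![1, 0, 1, 0, 0],
    ![0, -1, -1, -1, 0],
    ![0, -1, 0, -1, 1]]

/-- The values of the forms `kerForm` at the points `testPt`. -/
def kerMat (R : Type*) [CommRing R] : Matrix (Fin 26) (Fin 26) R :=
  Matrix.of fun i j => kerForm (testPt j) i

lemma map_lowMat {R R' : Type*} [CommRing R] [CommRing R'] (φ : R →+* R') (e w : R) :
    (lowMat e w).map φ = lowMat (φ e) (φ w) := by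
  ext i j
  simp [lowMat, map_pt]

lemma map_highMat {R R' : Type*} [CommRing R] [CommRing R'] (φ : R →+* R') (e w : R) :
    (highMat e w).map φ = highMat (φ e) (φ w) := by
  ext i j
  simp [highMat, map_highForm, map_nodePt]

lemma map_kerMat {R R' : Type*} [CommRing R] [CommRing R'] (φ : R →+* R') :
    (kerMat R).map φ = kerMat R' := by
  have h : ∀ j, (fun l => φ ((testPt j : Fin 5 → R) l)) = testPt j := by
    intro j
    funext l
    fin_cases j <;> fin_cases l <;> simp [testPt]
  ext i j
  simp [kerMat, map_kerForm, h]

/-- The inverse of `lowMat` modulo `31`. -/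
def lowInv : Matrix (Fin 10) (Fin 10) (ZMod 31) :=
  !![26, 21, 21, 27, 5, 27, 27, 10, 10, 27;
     6, 7, 7, 29, 25, 29, 29, 24, 24, 29;
     29, 15, 20, 9, 27, 30, 16, 28, 14, 2;
     29, 20, 15, 30, 27, 9, 2, 14, 28, 16;
     2, 19, 8, 24, 23, 11, 23, 5, 9, 27;
     2, 8, 19, 11, 23, 24, 27, 9, 5, 23;
     16, 0, 7, 2, 7, 28, 5, 8, 1, 10;
     16, 7, 0, 28, 7, 2, 10, 1, 8, 5;
     15, 30, 28, 24, 21, 2, 28, 27, 29, 19;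
     15, 28, 30, 2, 21, 24, 19, 29, 27, 28]

/-- The inverse of `highMat` modulo `31`. -/
def highInv : Matrix (Fin 16) (Fin 16) (ZMod 31) :=
  !![6, 11, 28, 19, 19, 19, 28, 2, 2, 3, 10, 12, 12, 0, 0, 0;
     0, 3, 2, 8, 12, 12, 2, 29, 29, 28, 21, 19, 19, 0, 0, 0;
     0, 0, 30, 5, 12, 12, 2, 29, 29, 0, 21, 22, 22, 0, 0, 0;
     28, 0, 11, 7, 19, 19, 9, 2, 2, 0, 10, 9, 9, 0, 0, 0;
     14, 22, 4, 5, 22, 0, 16, 13, 7, 6, 9, 7, 18, 11, 26, 4;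
     14, 22, 4, 5, 0, 22, 16, 7, 13, 6, 9, 18, 7, 20, 5, 27;
     0, 6, 18, 7, 9, 0, 10, 18, 24, 25, 22, 24, 13, 10, 24, 18;
     0, 6, 18, 7, 0, 9, 10, 24, 18, 25, 22, 13, 24, 21, 7, 13;
     14, 22, 23, 17, 0, 0, 3, 26, 1, 6, 0, 30, 26, 2, 17, 8;
     14, 22, 23, 17, 0, 0, 3, 1, 26, 6, 0, 26, 30, 29, 14, 23;
     0, 6, 26, 30, 0, 0, 29, 5, 30, 25, 0, 1, 5, 29, 30, 5;
     0, 6, 26, 30, 0, 0, 29, 30, 5, 25, 0, 5, 1, 2, 1, 26;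
     0, 0, 19, 12, 9, 0, 8, 23, 23, 0, 22, 23, 8, 12, 19, 19;
     0, 0, 19, 12, 0, 9, 8, 23, 23, 0, 22, 8, 23, 19, 12, 12;
     0, 0, 8, 23, 22, 0, 5, 8, 8, 0, 9, 8, 23, 5, 8, 8;
     0, 0, 8, 23, 0, 22, 5, 8, 8, 0, 9, 23, 8, 26, 23, 23]

/-- The inverse of `kerMat` modulo `31`. -/
def kerInv : Matrix (Fin 26) (Fin 26) (ZMod 31) :=
  !![14, 30, 18, 0, 0, 0, 30, 0, 0, 0, 24, 1, 0, 0, 16, 24, 1, 0, 16, 0, 0, 22, 1, 8, 8, 17;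
     1, 0, 20, 0, 0, 12, 24, 30, 0, 0, 9, 0, 1, 0, 18, 9, 0, 1, 18, 0, 12, 6, 19, 9, 9, 19;
     20, 0, 18, 1, 0, 3, 26, 0, 1, 0, 18, 0, 0, 30, 16, 21, 0, 0, 20, 0, 5, 22, 18, 8, 25, 17;
     11, 0, 18, 0, 1, 25, 26, 0, 0, 1, 30, 0, 0, 0, 20, 27, 0, 0, 16, 30, 30, 22, 18, 25, 8, 19;
     30, 0, 26, 0, 0, 30, 26, 0, 0, 0, 16, 0, 0, 0, 26, 16, 0, 0, 26, 0, 15, 18, 18, 13, 13, 26;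
     0, 0, 5, 0, 0, 29, 26, 0, 0, 0, 1, 0, 0, 0, 22, 1, 0, 0, 22, 0, 11, 5, 10, 11, 11, 21;
     25, 0, 16, 15, 0, 16, 27, 0, 0, 0, 13, 15, 0, 0, 18, 8, 0, 0, 18, 0, 11, 23, 2, 9, 9, 17;
     13, 0, 17, 0, 15, 4, 28, 0, 0, 0, 20, 0, 0, 0, 17, 25, 15, 0, 17, 0, 2, 7, 17, 24, 24, 17;
     9, 0, 15, 0, 16, 4, 15, 0, 0, 0, 27, 0, 0, 0, 16, 22, 15, 0, 16, 0, 10, 8, 8, 8, 8, 16;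
     13, 0, 0, 16, 0, 8, 0, 0, 0, 0, 18, 15, 0, 0, 0, 23, 0, 0, 0, 0, 7, 0, 0, 0, 0, 0;
     21, 0, 24, 0, 0, 6, 22, 0, 0, 0, 2, 0, 0, 0, 8, 2, 0, 0, 8, 0, 17, 27, 12, 4, 4, 8;
     24, 0, 1, 0, 0, 25, 12, 0, 15, 0, 9, 0, 15, 0, 2, 4, 0, 0, 2, 0, 8, 15, 25, 1, 1, 1;
     8, 0, 17, 0, 0, 9, 28, 0, 0, 15, 20, 0, 0, 0, 17, 25, 0, 15, 17, 0, 2, 7, 17, 24, 24, 17;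
     8, 0, 0, 0, 0, 13, 0, 0, 0, 16, 23, 0, 0, 0, 0, 18, 0, 15, 0, 0, 7, 0, 0, 0, 0, 0;
     8, 0, 0, 0, 0, 13, 0, 0, 16, 0, 18, 0, 15, 0, 0, 23, 0, 0, 0, 0, 7, 0, 0, 0, 0, 0;
     18, 0, 6, 0, 0, 16, 27, 0, 0, 0, 14, 0, 0, 0, 21, 14, 0, 0, 21, 0, 12, 28, 2, 3, 3, 6;
     19, 0, 23, 0, 0, 19, 23, 0, 0, 0, 4, 0, 0, 0, 9, 20, 0, 0, 7, 0, 0, 4, 4, 12, 27, 24;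
     26, 0, 17, 0, 0, 12, 28, 0, 0, 0, 12, 0, 0, 0, 17, 12, 0, 0, 17, 0, 9, 7, 17, 24, 24, 17;
     11, 0, 25, 0, 0, 23, 4, 0, 0, 0, 14, 0, 0, 0, 25, 14, 0, 0, 25, 0, 26, 3, 29, 28, 28, 25;
     26, 0, 17, 0, 0, 25, 12, 0, 0, 0, 12, 0, 0, 0, 17, 30, 0, 0, 2, 0, 24, 7, 25, 24, 1, 17;
     18, 0, 25, 0, 0, 17, 20, 0, 0, 0, 7, 0, 0, 0, 25, 20, 0, 0, 9, 0, 21, 3, 21, 28, 20, 25;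
     18, 0, 8, 0, 0, 21, 23, 0, 0, 0, 10, 0, 0, 0, 8, 13, 0, 0, 23, 0, 26, 27, 4, 4, 27, 8;
     26, 0, 0, 0, 0, 29, 15, 0, 0, 0, 5, 0, 0, 0, 0, 2, 0, 0, 16, 0, 29, 0, 8, 0, 8, 0;
     26, 0, 8, 0, 0, 1, 7, 0, 0, 0, 2, 0, 0, 0, 8, 2, 0, 0, 8, 0, 17, 27, 12, 4, 4, 8;
     15, 0, 16, 0, 0, 15, 16, 0, 0, 0, 16, 0, 0, 0, 15, 16, 0, 0, 15, 0, 25, 23, 23, 23, 23, 16;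
     4, 0, 16, 0, 0, 4, 16, 0, 0, 0, 27, 0, 0, 0, 15, 27, 0, 0, 15, 0, 28, 23, 23, 23, 23, 15]

set_option maxRecDepth 100000 in
lemma lowMat_mul : lowMat ((9 : ZMod 31) ^ 3) (9 ^ 5) * lowInv = 1 := by decide +kernel

set_option maxRecDepth 100000 in
lemma highMat_mul : highMat ((9 : ZMod 31) ^ 3) (9 ^ 5) * highInv = 1 := by decide +kernel

set_option maxRecDepth 100000 in
lemma kerMat_mul : kerMat (ZMod 31) * kerInv = 1 := by decide +kernel

/-! ### Independent families of forms -/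

lemma lowMat_det_ne_zero {ζ : ℂ} (hζ : IsPrimitiveRoot ζ 15) :
    (lowMat (ζ ^ 3) (ζ ^ 5)).det ≠ 0 := by
  have h := det_ne_zero_of_mod hζ (lowMat (Polynomial.X ^ 3) (Polynomial.X ^ 5)) lowInv (by
    rw [map_lowMat, map_pow, map_pow, Polynomial.coe_eval₂RingHom, Polynomial.eval₂_X]
    exact lowMat_mul)
  rw [map_lowMat, map_pow, map_pow] at h
  simpa using h

lemma highMat_det_ne_zero {ζ : ℂ} (hζ : IsPrimitiveRoot ζ 15) :
    (highMat (ζ ^ 3) (ζ ^ 5)).det ≠ 0 := by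
  have h := det_ne_zero_of_mod hζ (highMat (Polynomial.X ^ 3) (Polynomial.X ^ 5)) highInv (by
    rw [map_highMat, map_pow, map_pow, Polynomial.coe_eval₂RingHom, Polynomial.eval₂_X]
    exact highMat_mul)
  rw [map_highMat, map_pow, map_pow] at h
  simpa using h

lemma kerMat_det_ne_zero {ζ : ℂ} (hζ : IsPrimitiveRoot ζ 15) : (kerMat ℂ).det ≠ 0 := by
  have h := det_ne_zero_of_mod hζ (kerMat (Polynomial ℤ)) kerInv (by
    rw [map_kerMat]
    exact kerMat_mul)
  rwa [map_kerMat] at h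

/-- The forms `kerForm` as vectors of the kernel of `evalMap`. -/
noncomputable def kerVec {ζ : ℂ} (hζ : IsPrimitiveRoot ζ 15) (i : Fin 26) :
    LinearMap.ker evalMap :=
  ⟨⟨kerForm X i, kerForm_mem_V i⟩, by
    rw [LinearMap.mem_ker]
    funext s
    obtain ⟨p, rfl⟩ := (nodeEquiv hζ).surjective s
    change (aeval (nodePt (ζ ^ 3) (ζ ^ 5) p.1)).toRingHom (kerForm X i) = 0
    rw [map_kerForm]
    convert! kerForm_nodePt (sum_pow_five hζ) (sum_pow_three hζ) p i using 2
    funext l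
    exact aeval_X _ l⟩

lemma linearIndependent_kerVec {ζ : ℂ} (hζ : IsPrimitiveRoot ζ 15) :
    LinearIndependent ℂ (kerVec hζ) := by
  let L : LinearMap.ker evalMap →ₗ[ℂ] (Fin 26 → ℂ) :=
    LinearMap.pi fun j => (aeval (testPt j)).toLinearMap ∘ₗ V.subtype ∘ₗ Submodule.subtype _
  refine LinearIndependent.of_comp L ?_
  convert! Matrix.linearIndependent_rows_of_det_ne_zero (kerMat_det_ne_zero hζ) using 1
  funext i j
  change (aeval (testPt j)).toRingHom (kerForm X i) = kerForm (testPt j) i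
  rw [map_kerForm]
  congr 1
  funext l
  exact aeval_X _ l

lemma evalMap_lowForm {ζ : ℂ} (hζ : IsPrimitiveRoot ζ 15) (i : LowIdx) (p : NodeIdx) :
    evalMap ⟨lowForm X i.1, lowForm_mem_V i⟩ (nodeEquiv hζ p) =
      lowForm (nodePt (ζ ^ 3) (ζ ^ 5) p.1) i.1 := by
  change (aeval (nodePt (ζ ^ 3) (ζ ^ 5) p.1)).toRingHom (lowForm X i.1) = _
  rw [map_lowForm]
  congr 1
  funext l
  exact aeval_X _ l

lemma evalMap_highForm {ζ : ℂ} (hζ : IsPrimitiveRoot ζ 15) (i : Fin 16) (p : NodeIdx) :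
    evalMap ⟨highForm X i, highForm_mem_V i⟩ (nodeEquiv hζ p) =
      highForm (nodePt (ζ ^ 3) (ζ ^ 5) p.1) i := by
  change (aeval (nodePt (ζ ^ 3) (ζ ^ 5) p.1)).toRingHom (highForm X i) = _
  rw [map_highForm]
  congr 1
  funext l
  exact aeval_X _ l

/-- The hundred nodes with critical value `-2`. -/
def nodeC (p : Fin 10 × Fin 10) : NodeIdx :=
  ⟨(Fin.natAdd 6 p.1, Fin.natAdd 6 p.2), by revert p; decide⟩

/-- The sixteen nodes `sel`. -/
def nodeSel (i : Fin 16) : NodeIdx := ⟨sel i, by revert i; decide⟩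

/-- The 100 functions on the nodes given by the forms `lowForm` and `highForm`. -/
noncomputable def rangeVec : LowIdx ⊕ Fin 16 → S → ℂ :=
  Sum.elim (fun i => evalMap ⟨lowForm X i.1, lowForm_mem_V i⟩)
    (fun i => evalMap ⟨highForm X i, highForm_mem_V i⟩)

/-- Restriction to the nodes with critical value `-2` is injective on the span of the forms
`lowForm`, by the Kronecker product structure, and kills the forms `highForm`. -/
lemma linearIndependent_rangeVec {ζ : ℂ} (hζ : IsPrimitiveRoot ζ 15) :
    LinearIndependent ℂ rangeVec := by
  let r : (S → ℂ) →ₗ[ℂ] (Fin 10 × Fin 10 → ℂ) :=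
    LinearMap.funLeft ℂ ℂ fun p => nodeEquiv hζ (nodeC p)
  have hlow : LinearIndependent ℂ
      (r ∘ fun i : LowIdx => evalMap ⟨lowForm X i.1, lowForm_mem_V i⟩) := by
    have hdet : (Matrix.kroneckerMap (· * ·) (lowMat (ζ ^ 3) (ζ ^ 5))
        (lowMat (ζ ^ 3) (ζ ^ 5))).det ≠ 0 := by
      rw [Matrix.det_kronecker]
      exact mul_ne_zero (pow_ne_zero _ (lowMat_det_ne_zero hζ))
        (pow_ne_zero _ (lowMat_det_ne_zero hζ))
    convert! (Matrix.linearIndependent_rows_of_det_ne_zero hdet).comp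
      (Subtype.val : LowIdx → Fin 10 × Fin 10) Subtype.val_injective using 1
    funext i p
    refine (evalMap_lowForm hζ i (nodeC p)).trans ?_
    simp [lowForm, nodePt, nodeC, lowMat, mul_assoc]
  have hhigh : LinearIndependent ℂ fun i => evalMap ⟨highForm X i, highForm_mem_V i⟩ := by
    refine LinearIndependent.of_comp
      (LinearMap.funLeft ℂ ℂ fun j => nodeEquiv hζ (nodeSel j)) ?_
    convert! Matrix.linearIndependent_rows_of_det_ne_zero (highMat_det_ne_zero hζ) using 1
    funext i j
    exact evalMap_highForm hζ i (nodeSel j)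
  refine (LinearIndependent.of_comp r hlow).sum_type hhigh ?_
  refine (Submodule.range_ker_disjoint hlow).mono_right ?_
  rw [Submodule.span_le]
  rintro _ ⟨i, rfl⟩
  rw [SetLike.mem_coe, LinearMap.mem_ker]
  funext p
  refine (evalMap_highForm hζ i (nodeC p)).trans ?_
  have hcls : ∀ a : Fin 10, cls (Fin.natAdd 6 a) = 2 := by decide
  exact highForm_nodePt (sum_pow_five hζ) (sum_pow_three hζ) _ _ (hcls _) (hcls _) i

/-- The space of quintic forms vanishing at the 120 nodes of the Chebyshev quintic
threefold has dimension 26; hence the evaluation map has rank 100 and its cokernel —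
the defect of the nodal quintic `X̄` — has dimension 20. -/
theorem defect_of_nodal_quintic :
    Module.finrank ℂ V = 126 ∧
    S.ncard = 120 ∧
    Module.finrank ℂ (LinearMap.ker evalMap) = 26 ∧
    Module.finrank ℂ (LinearMap.range evalMap) = 100 ∧
    Module.finrank ℂ ((S → ℂ) ⧸ LinearMap.range evalMap) = 20 := by
  obtain ⟨ζ, hζ⟩ : ∃ ζ : ℂ, IsPrimitiveRoot ζ 15 :=
    ⟨_, Complex.isPrimitiveRoot_exp 15 (by norm_num)⟩
  have hV := finrank_V
  have hS := ncard_S hζ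
  have : Module.Finite ℂ V := Module.finite_of_finrank_pos (by rw [hV]; norm_num)
  have : Fintype S := Fintype.ofEquiv _ (nodeEquiv hζ)
  have hfun : Module.finrank ℂ (S → ℂ) = 120 := by
    rw [Module.finrank_fintype_fun_eq_card, ← Nat.card_eq_fintype_card, Nat.card_coe_set_eq, hS]
  have hker : 26 ≤ Module.finrank ℂ (LinearMap.ker evalMap) := by
    simpa using (linearIndependent_kerVec hζ).fintype_card_le_finrank
  have hrange : 100 ≤ Module.finrank ℂ (LinearMap.range evalMap) := by
    have hmem : ∀ i, rangeVec i ∈ LinearMap.range evalMap := by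
      rintro (i | i)
      · exact LinearMap.mem_range_self _ _
      · exact LinearMap.mem_range_self _ _
    have hli : LinearIndependent ℂ
        fun i => (⟨rangeVec i, hmem i⟩ : LinearMap.range evalMap) :=
      LinearIndependent.of_comp (LinearMap.range evalMap).subtype
        (linearIndependent_rangeVec hζ)
    have hcard : Fintype.card (LowIdx ⊕ Fin 16) = 100 := by decide +kernel
    rw [← hcard]
    exact hli.fintype_card_le_finrank
  have hsum := LinearMap.finrank_range_add_finrank_ker evalMap
  have hquot := Submodule.finrank_quotient_add_finrank (LinearMap.range evalMap)
  rw [hV] at hsum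
  rw [hfun] at hquot
  exact ⟨hV, hS, by omega, by omega, by omega⟩
end
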